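/- arXiv:2006.15393 — 3 statements merged into one kernel-verified Lean document; each statement's English description precedes it below -/
import Mathlib

section
/- Let S be a right reversible and left amenable semitopological semigroup, and let K be a weakly compact convex subset of a Banach space. Then every jointly weakly continuous and super asymptotically nonexpansive action of S on K has a common fixed point. -/
/-- A (nonempty) left ideal of a semigroup `S`: `I ≠ ∅` and `S * I ⊆ I`. -/
def IsLeftIdeal {S : Type*} [Semigroup S] (I : Set S) : Prop :=
  I.Nonempty ∧ ∀ s : S, ∀ i ∈ I, s * i ∈ I

/-- `S` is right reversible: any two closed left ideals of `S` intersect. -/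
def RightReversible (S : Type*) [Semigroup S] [TopologicalSpace S] : Prop :=
  ∀ I J : Set S, IsLeftIdeal I → IsLeftIdeal J → IsClosed I → IsClosed J → (I ∩ J).Nonempty

/-- The left translation `l_s f`, `l_s f (t) = f (s * t)`, of a bounded continuous
function `f` on `S` (the continuity of `t ↦ s * t` being supplied as a hypothesis). -/
noncomputable def lTrans {S : Type*} [Mul S] [TopologicalSpace S] (s : S)
    (hc : Continuous fun t => s * t) (f : BoundedContinuousFunction S ℝ) :
    BoundedContinuousFunction S ℝ :=
  f.compContinuous ⟨fun t => s * t, hc⟩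

/-- `f ∈ LUC(S)`: the map `s ↦ l_s f` is norm continuous from `S` into `CB(S)`. -/
def IsLUC {S : Type*} [Mul S] [TopologicalSpace S]
    (hmulL : ∀ s : S, Continuous fun t => s * t) (f : BoundedContinuousFunction S ℝ) :
    Prop :=
  Continuous fun s : S => lTrans s (hmulL s) f

/-- `LUC(S)` admits a left invariant mean: there is a linear functional `m` on `CB(S)`
with `‖m‖ ≤ 1`, `m(1) = 1` (hence `‖m‖ = m(1) = 1`), and `m (l_s f) = m f` for every
`s ∈ S` and every `f ∈ LUC(S)`.  (`S` is then called left amenable.) -/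
def LeftAmenable {S : Type*} [Mul S] [TopologicalSpace S]
    (hmulL : ∀ s : S, Continuous fun t => s * t) : Prop :=
  ∃ m : BoundedContinuousFunction S ℝ →ₗ[ℝ] ℝ,
    (∀ f, |m f| ≤ ‖f‖) ∧ m 1 = 1 ∧
    ∀ s : S, ∀ f : BoundedContinuousFunction S ℝ, IsLUC hmulL f →
      m (lTrans s (hmulL s) f) = m f

/-- Super asymptotically nonexpansive action. -/
def SuperAsympNonexpansive {S E : Type*} [Semigroup S] [NormedAddCommGroup E]
    (act : S → E → E) (K : Set E) : Prop :=
  ∀ x ∈ K, ∀ t : S, ∃ I : Set S, IsLeftIdeal I ∧ I ⊆ Set.range (· * t) ∧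
    ∀ s ∈ I, ∀ y ∈ K, ‖act s x - act s y‖ ≤ ‖x - y‖

/-!
Let `C` be a minimal closed convex set containing the limit points of all its orbits along the
filter of closed left ideals, and let `F` be a minimal closed invariant subset of the limit points
of some orbit in `C`. Weakly compact sets are norm fragmented, so `F` is covered by finitely many
preimages of a norm-small weakly open set; moving these along the ideals where the action is
nonexpansive shows that `F` is norm totally bounded. Left amenability makes every `s` act
surjectively on `F`. If `F` had two points, DeMarr's lemma would provide a point of `C` within
distance `r < diam F` of all of `F`; the points of `C` with this property again contain the limit
points of their orbits, because `s` maps `F` onto itself, so by minimality they fill up `C ⊇ F`,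
which is absurd. Hence `F` is a single point, and it is fixed.
-/

open Set Filter Topology Metric
open scoped BoundedContinuousFunction

section WeakTopology

variable {X E : Type*} [TopologicalSpace X] [NormedAddCommGroup E] [NormedSpace ℝ E]

lemma isClosed_preimage_of_convex {g : X → E} (hg : Continuous fun x => toWeakSpace ℝ E (g x))
    {C : Set E} (hC : Convex ℝ C) (hcl : IsClosed C) : IsClosed (g ⁻¹' C) := by
  have hweak : IsClosed (toWeakSpace ℝ E '' C) := by
    rw [← hcl.closure_eq, hC.toWeakSpace_closure ℝ]
    exact isClosed_closure
  simpa only [preimage, (toWeakSpace ℝ E).injective.mem_set_image] using hweak.preimage hg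

lemma isClosed_setOf_dist_le {g h : X → E} (hg : Continuous fun x => toWeakSpace ℝ E (g x))
    (hh : Continuous fun x => toWeakSpace ℝ E (h x)) (c : ℝ) :
    IsClosed {x | dist (g x) (h x) ≤ c} := by
  have hsub : Continuous fun x => toWeakSpace ℝ E (g x - h x) := by
    simp only [map_sub]
    exact hg.sub hh
  simpa only [preimage, mem_closedBall_zero_iff, dist_eq_norm] using
    isClosed_preimage_of_convex hsub (convex_closedBall 0 c) isClosed_closedBall

lemma continuous_dual_apply {g : X → E} (hg : Continuous fun x => toWeakSpace ℝ E (g x))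
    (f : StrongDual ℝ E) : Continuous fun x => f (g x) :=
  (WeakBilin.eval_continuous (topDualPairing ℝ E).flip f).comp hg

lemma isSeparable_image_closure {ι : X → E} (hι : Continuous fun x => toWeakSpace ℝ E (ι x))
    {A : Set X} (hA : A.Countable) : TopologicalSpace.IsSeparable (ι '' closure A) := by
  set M : Set E := closure (Submodule.span ℝ (ι '' A))
  have hM : IsClosed (ι ⁻¹' M) :=
    isClosed_preimage_of_convex hι (Submodule.convex _).closure isClosed_closure
  have hAM : A ⊆ ι ⁻¹' M := fun x hx => subset_closure (Submodule.subset_span ⟨x, hx, rfl⟩)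
  exact ((hA.image ι).isSeparable.span (R := ℝ)).closure.mono
    (image_subset_iff.2 (closure_minimal hAM hM))

end WeakTopology

section Fragmentation

lemma countable_of_pairwise_lt_dist {ι E : Type*} [MetricSpace E] {f : ι → E} {ε : ℝ}
    (hε : 0 < ε) (hf : Pairwise fun i j => ε < dist (f i) (f j))
    (hsep : TopologicalSpace.IsSeparable (range f)) : Countable ι := by
  have hinj : Function.Injective f := fun i j hij => by
    by_contra hne
    have : ε < dist (f i) (f j) := hf hne
    rw [hij, dist_self] at this
    exact hε.not_gt this
  have : SecondCountableTopology (range f) := hsep.secondCountableTopology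
  have : DiscreteTopology (range f) := by
    refine DiscreteTopology.of_forall_le_dist hε ?_
    rintro ⟨_, i, rfl⟩ ⟨_, j, rfl⟩ hne
    exact (hf fun hij => hne (by rw [hij])).le
  have : Countable (range f) := countable_of_Lindelof_of_discrete
  exact (rangeFactorization_injective.2 hinj).countable

lemma exists_pairwise_of_cantorScheme {X α : Type*} [TopologicalSpace X] [CompactSpace X]
    {R : X → X → Prop} {D : List α → Set X} (hanti : CantorScheme.Antitone D)
    (hne : ∀ l, (D l).Nonempty)
    (hsep : ∀ l, Pairwise fun a b =>
      ∀ p ∈ closure (D (a :: l)), ∀ q ∈ closure (D (b :: l)), R p q) :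
    ∃ (x : List α → X) (z : (ℕ → α) → X),
      (∀ β, z β ∈ closure (range x)) ∧ Pairwise fun β γ => R (z β) (z γ) := by
  choose x hx using hne
  have hcluster (β : ℕ → α) : ∃ z, MapClusterPt z atTop fun n => x (PiNat.res β n) :=
    exists_clusterPt_of_compactSpace _
  choose z hz using hcluster
  have hmem {β : ℕ → α} {A : Set X} (h : ∀ᶠ n in atTop, x (PiNat.res β n) ∈ A) :
      z β ∈ closure A :=
    mem_closure_iff_clusterPt.2 (ClusterPt.mono (hz β) (tendsto_principal.2 h))
  have hres (β : ℕ → α) : Antitone fun n => D (PiNat.res β n) :=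
    antitone_nat_of_succ_le fun n => hanti _ _
  have hzD (β : ℕ → α) (n : ℕ) : z β ∈ closure (D (PiNat.res β n)) :=
    hmem ((eventually_ge_atTop n).mono fun k hk => hres β hk (hx _))
  refine ⟨x, z, fun β => hmem (Eventually.of_forall fun n => mem_range_self _), ?_⟩
  intro β γ hβγ
  set n := PiNat.firstDiff β γ
  have hprefix : PiNat.res β n = PiNat.res γ n :=
    PiNat.res_eq_res.2 fun m hm => PiNat.apply_eq_of_lt_firstDiff hm
  have hβ := hzD β (n + 1)
  have hγ := hzD γ (n + 1)
  rw [PiNat.res_succ] at hβ hγ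
  rw [← hprefix] at hγ
  exact hsep _ (PiNat.apply_firstDiff_ne hβγ) _ hβ _ hγ

variable {X E : Type*} [TopologicalSpace X] [NormedAddCommGroup E] [NormedSpace ℝ E] {ι : X → E}

lemma exists_open_split (hι : Continuous fun x => toWeakSpace ℝ E (ι x)) {ε : ℝ} {U : Set X}
    (hU : IsOpen U) {x y : X} (hx : x ∈ U) (hy : y ∈ U) (hxy : ε < dist (ι x) (ι y)) :
    ∃ V W : Set X, (IsOpen V ∧ V.Nonempty ∧ V ⊆ U) ∧ (IsOpen W ∧ W.Nonempty ∧ W ⊆ U) ∧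
      ∀ p ∈ closure V, ∀ q ∈ closure W, ε < dist (ι p) (ι q) := by
  obtain ⟨f, hf_norm, hf⟩ := exists_dual_vector'' ℝ (ι x - ι y)
  replace hf : f (ι x) - f (ι y) = dist (ι x) (ι y) := by simpa [dist_eq_norm] using hf
  have hfι := continuous_dual_apply hι f
  obtain ⟨b, hb, hbx⟩ : ∃ b, f (ι y) + ε < b ∧ b < f (ι x) := exists_between (by linarith)
  obtain ⟨a, ha, hab⟩ : ∃ a, f (ι y) < a ∧ a < b - ε := exists_between (by linarith)
  refine ⟨U ∩ {p | b < f (ι p)}, U ∩ {q | f (ι q) < a},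
    ⟨hU.inter (isOpen_lt continuous_const hfι), ⟨x, hx, hbx⟩, inter_subset_left⟩,
    ⟨hU.inter (isOpen_lt hfι continuous_const), ⟨y, hy, ha⟩, inter_subset_left⟩, ?_⟩
  intro p hp q hq
  have hbp : p ∈ {z | b ≤ f (ι z)} :=
    closure_minimal (fun z hz => show b ≤ f (ι z) from le_of_lt hz.2)
      (isClosed_le continuous_const hfι) hp
  have hqa : q ∈ {z | f (ι z) ≤ a} :=
    closure_minimal (fun z hz => show f (ι z) ≤ a from le_of_lt hz.2)
      (isClosed_le hfι continuous_const) hq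
  have hfpq : f (ι p) - f (ι q) ≤ dist (ι p) (ι q) := by
    rw [← map_sub, dist_eq_norm, ← one_mul ‖_‖]
    exact (le_abs_self _).trans (f.le_of_opNorm_le hf_norm _)
  rw [mem_ofPred_eq] at hbp hqa
  linarith

lemma exists_separated_cantorScheme [Nonempty X]
    (hι : Continuous fun x => toWeakSpace ℝ E (ι x)) {ε : ℝ}
    (hlarge : ∀ U : Set X, IsOpen U → U.Nonempty → ∃ x ∈ U, ∃ y ∈ U, ε < dist (ι x) (ι y)) :
    ∃ D : List Bool → Set X, CantorScheme.Antitone D ∧ (∀ l, (D l).Nonempty) ∧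
      ∀ l, Pairwise fun a b => ∀ p ∈ closure (D (a :: l)), ∀ q ∈ closure (D (b :: l)),
        ε < dist (ι p) (ι q) := by
  have hsplit (U : {U : Set X // IsOpen U ∧ U.Nonempty}) :
      ∃ V : Bool → {U : Set X // IsOpen U ∧ U.Nonempty}, (∀ b, (V b : Set X) ⊆ U) ∧
        Pairwise fun a b => ∀ p ∈ closure (V a : Set X), ∀ q ∈ closure (V b : Set X),
          ε < dist (ι p) (ι q) := by
    obtain ⟨x, hx, y, hy, hxy⟩ := hlarge U U.2.1 U.2.2
    obtain ⟨V, W, ⟨hVo, hVne, hVU⟩, ⟨hWo, hWne, hWU⟩, hVW⟩ :=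
      exists_open_split hι U.2.1 hx hy hxy
    refine ⟨fun b => cond b ⟨V, hVo, hVne⟩ ⟨W, hWo, hWne⟩, Bool.forall_bool.2 ⟨hWU, hVU⟩, ?_⟩
    rintro (_ | _) (_ | _) hab p hp q hq
    · exact absurd rfl hab
    · rw [dist_comm]; exact hVW q hq p hp
    · exact hVW p hp q hq
    · exact absurd rfl hab
  choose V hVsub hVsep using hsplit
  let D : List Bool → {U : Set X // IsOpen U ∧ U.Nonempty} :=
    List.foldr (fun b U => V U b) ⟨univ, isOpen_univ, univ_nonempty⟩
  exact ⟨fun l => D l, fun l b => hVsub (D l) b, fun l => (D l).2.2, fun l => hVsep (D l)⟩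

/-- Namioka's theorem that weakly compact sets are norm fragmented. -/
theorem exists_isOpen_forall_dist_le [CompactSpace X] [Nonempty X]
    (hι : Continuous fun x => toWeakSpace ℝ E (ι x)) {ε : ℝ} (hε : 0 < ε) :
    ∃ U : Set X, IsOpen U ∧ U.Nonempty ∧ ∀ x ∈ U, ∀ y ∈ U, dist (ι x) (ι y) ≤ ε := by
  by_contra! hlarge
  obtain ⟨D, hanti, hne, hsep⟩ := exists_separated_cantorScheme hι hlarge
  obtain ⟨x, z, hzx, hz⟩ := exists_pairwise_of_cantorScheme hanti hne hsep
  have hrange : range (ι ∘ z) ⊆ ι '' closure (range x) :=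
    range_subset_iff.2 fun β => mem_image_of_mem ι (hzx β)
  have : Countable (ℕ → Bool) := countable_of_pairwise_lt_dist hε hz
    ((isSeparable_image_closure hι (countable_range x)).mono hrange)
  have hcard : Cardinal.continuum ≤ Cardinal.aleph0 := by
    simpa only [Cardinal.mk_pi, Cardinal.mk_bool, Cardinal.prod_const, Cardinal.mk_nat,
      Cardinal.lift_id, Cardinal.two_power_aleph0] using Cardinal.mk_le_aleph0_iff.2 this
  exact Cardinal.aleph0_lt_continuum.not_ge hcard

end Fragmentation

section NormalStructure

variable {E : Type*} [NormedAddCommGroup E] [NormedSpace ℝ E]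

/-- DeMarr's lemma. -/
theorem exists_mem_convexHull_subset_closedBall {A : Set E} (hA : TotallyBounded A)
    (hA' : A.Nontrivial) : ∃ u ∈ convexHull ℝ A, ∃ r < diam A, A ⊆ closedBall u r := by
  classical
  set d := diam A
  have hd : 0 < d := diam_pos hA' hA.isBounded
  obtain ⟨T, hTA, hTfin, hT⟩ := finite_approx_of_totallyBounded hA (d / 2) (half_pos hd)
  lift T to Finset E using hTfin
  have hTne : T.Nonempty := by
    obtain ⟨y, hy⟩ := hA'.nonempty
    obtain ⟨z, hz, -⟩ := mem_iUnion₂.1 (hT hy)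
    exact ⟨z, hz⟩
  have hcard : (0 : ℝ) < T.card := Nat.cast_pos.2 hTne.card_pos
  have hweight : 0 < ∑ _x ∈ T, (1 : ℝ) := by simpa using hcard
  refine ⟨T.centerMass (fun _ => 1) id,
    T.centerMass_mem_convexHull (fun _ _ => zero_le_one) hweight fun x hx => hTA hx,
    d - d / (2 * T.card), sub_lt_self _ (by positivity), fun y hy => ?_⟩
  obtain ⟨z, hz, hyz⟩ := mem_iUnion₂.1 (hT hy)
  have hsum : ∑ x ∈ T, dist x y ≤ T.card * d - d / 2 := calc
    ∑ x ∈ T, dist x y = dist z y + ∑ x ∈ T.erase z, dist x y := (T.add_sum_erase _ hz).symm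
    _ ≤ d / 2 + ∑ _x ∈ T.erase z, d := by
      gcongr with x hx
      · exact (mem_ball'.1 hyz).le
      · exact dist_le_diam_of_mem hA.isBounded (hTA (Finset.mem_of_mem_erase hx)) hy
    _ = T.card * d - d / 2 := by
      rw [Finset.sum_const, nsmul_eq_mul, Finset.cast_card_erase_of_mem hz]
      ring
  rw [mem_closedBall, dist_comm]
  calc dist (T.centerMass (fun _ => 1) id) y
      ≤ T.centerMass (fun _ => (1 : ℝ)) fun x => dist x y :=
        (convexOn_dist y convex_univ).map_centerMass_le (fun _ _ => zero_le_one) hweight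
          fun _ _ => mem_univ _
    _ = (T.card : ℝ)⁻¹ * ∑ x ∈ T, dist x y := by simp [Finset.centerMass]
    _ ≤ (T.card : ℝ)⁻¹ * (T.card * d - d / 2) := by gcongr
    _ = d - d / (2 * T.card) := by field_simp

end NormalStructure

section LeftIdeals

variable {S : Type*} [Semigroup S]

lemma IsLeftIdeal.inter {I J : Set S} (hI : IsLeftIdeal I) (hJ : IsLeftIdeal J)
    (hne : (I ∩ J).Nonempty) : IsLeftIdeal (I ∩ J) :=
  ⟨hne, fun s i hi => ⟨hI.2 s i hi.1, hJ.2 s i hi.2⟩⟩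

lemma IsLeftIdeal.image_mul_right {I : Set S} (hI : IsLeftIdeal I) (t : S) :
    IsLeftIdeal ((· * t) '' I) := by
  refine ⟨hI.1.image _, ?_⟩
  rintro s _ ⟨q, hq, rfl⟩
  exact ⟨s * q, hI.2 s q hq, mul_assoc _ _ _⟩

variable [TopologicalSpace S]

lemma IsLeftIdeal.closure (hmulL : ∀ t : S, Continuous fun s => t * s) {I : Set S}
    (hI : IsLeftIdeal I) : IsLeftIdeal (closure I) :=
  ⟨hI.1.closure, fun s _ hi => map_mem_closure (hmulL s) hi (hI.2 s)⟩

variable (S) in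
/-- The filter generated by the closed left ideals of `S`. Limits along it replace limits along
the ideals of the form `S * t`; it is proper when `S` is right reversible. -/
def closedLeftIdealFilter : Filter S :=
  ⨅ I ∈ {I : Set S | IsLeftIdeal I ∧ IsClosed I}, 𝓟 I

lemma RightReversible.hasBasis_closedLeftIdealFilter [Nonempty S] (hrev : RightReversible S) :
    (closedLeftIdealFilter S).HasBasis (fun I => IsLeftIdeal I ∧ IsClosed I) id := by
  refine hasBasis_biInf_principal' ?_ ⟨univ, ⟨univ_nonempty, fun _ _ _ => mem_univ _⟩,
    isClosed_univ⟩
  intro I hI J hJ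
  exact ⟨I ∩ J, ⟨hI.1.inter hJ.1 (hrev I J hI.1 hJ.1 hI.2 hJ.2), hI.2.inter hJ.2⟩,
    inter_subset_left, inter_subset_right⟩

lemma RightReversible.neBot_closedLeftIdealFilter [Nonempty S] (hrev : RightReversible S) :
    (closedLeftIdealFilter S).NeBot :=
  hrev.hasBasis_closedLeftIdealFilter.neBot_iff.2 fun hI => hI.1.1

lemma tendsto_mul_left_closedLeftIdealFilter (s : S) :
    Tendsto (s * ·) (closedLeftIdealFilter S) (closedLeftIdealFilter S) := by
  refine tendsto_iInf.2 fun I => tendsto_iInf.2 fun hI => tendsto_principal.2 ?_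
  exact mem_of_superset (mem_iInf_of_mem I (mem_iInf_of_mem hI (mem_principal_self I)))
    (hI.1.2 s)

lemma IsLeftIdeal.eventually_of_isClosed (hmulL : ∀ t : S, Continuous fun s => t * s)
    {I : Set S} (hI : IsLeftIdeal I) {p : S → Prop} (hp : IsClosed {s | p s})
    (h : ∀ s ∈ I, p s) : ∀ᶠ s in closedLeftIdealFilter S, p s :=
  mem_of_superset
    (mem_iInf_of_mem (_root_.closure I)
      (mem_iInf_of_mem ⟨hI.closure hmulL, isClosed_closure⟩ (mem_principal_self _)))
    (closure_minimal h hp)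

lemma RightReversible.eventually_of_eventually_mul_right [Nonempty S] (hrev : RightReversible S)
    (hmulL : ∀ t : S, Continuous fun s => t * s) {p : S → Prop} (hp : IsClosed {s | p s}) (t : S)
    (h : ∀ᶠ s in closedLeftIdealFilter S, p (s * t)) : ∀ᶠ s in closedLeftIdealFilter S, p s := by
  obtain ⟨I, ⟨hI, -⟩, hIp⟩ := hrev.hasBasis_closedLeftIdealFilter.eventually_iff.1 h
  exact (hI.image_mul_right t).eventually_of_isClosed hmulL hp (forall_mem_image.2 @hIp)

end LeftIdeals

section LimitSet

variable {S X : Type*} [Semigroup S] [TopologicalSpace S] [TopologicalSpace X]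

variable (S) in
/-- The limit points of the orbit of `x` along the closed left ideals of `S`. -/
def limitSet [SMul S X] (x : X) : Set X :=
  {y | MapClusterPt y (closedLeftIdealFilter S) fun s => s • x}

lemma isClosed_limitSet [SMul S X] (x : X) : IsClosed (limitSet S x) :=
  isClosed_setOfPred_clusterPt

lemma limitSet_nonempty [SMul S X] [CompactSpace X] [Nonempty S] (hrev : RightReversible S)
    (x : X) : (limitSet S x).Nonempty :=
  have := hrev.neBot_closedLeftIdealFilter
  exists_clusterPt_of_compactSpace _

lemma limitSet_subset_of_eventually [SMul S X] {x : X} {B : Set X} (hB : IsClosed B)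
    (h : ∀ᶠ s in closedLeftIdealFilter S, s • x ∈ B) : limitSet S x ⊆ B := fun _ hy =>
  hB.closure_subset (mem_closure_iff_clusterPt.2 (ClusterPt.mono hy (tendsto_principal.2 h)))

lemma smul_mem_limitSet [SemigroupAction S X] [ContinuousConstSMul S X] {x y : X} (s : S)
    (hy : y ∈ limitSet S x) : s • y ∈ limitSet S x := by
  have hsy : MapClusterPt (s • y) (closedLeftIdealFilter S) fun t => s • t • x :=
    hy.continuousAt_comp (continuous_const_smul s).continuousAt
  simp only [← mul_smul] at hsy
  exact hsy.of_comp (tendsto_mul_left_closedLeftIdealFilter s)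

end LimitSet

section Minimality

variable {S X : Type*} [TopologicalSpace X] [CompactSpace X]

lemma exists_minimal_isClosed_nonempty {P : Set X → Prop}
    (hP : ∀ c : Set (Set X), c.Nonempty → IsChain (· ⊆ ·) c → (∀ A ∈ c, P A) → P (⋂₀ c))
    {A : Set X} (hA : IsClosed A) (hne : A.Nonempty) (hPA : P A) :
    ∃ B ⊆ A, Minimal (fun B => IsClosed B ∧ B.Nonempty ∧ P B) B := by
  refine zorn_superset_nonempty {B : Set X | IsClosed B ∧ B.Nonempty ∧ P B} ?_ A ⟨hA, hne, hPA⟩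
  intro c hc hchain hcne
  have := hcne.to_subtype
  have hinter : (⋂₀ c).Nonempty :=
    IsCompact.nonempty_sInter_of_directed_nonempty_isCompact_isClosed
      (fun A hA B hB => (hchain.total hA hB).elim (fun h => ⟨A, hA, subset_rfl, h⟩)
        fun h => ⟨B, hB, h, subset_rfl⟩) (fun B hB => (hc hB).2.1)
      (fun B hB => (hc hB).1.isCompact) fun B hB => (hc hB).1
  exact ⟨⋂₀ c, ⟨isClosed_sInter fun B hB => (hc hB).1, hinter,
    hP c hcne hchain fun B hB => (hc hB).2.2⟩, fun B hB => sInter_subset_of_mem hB⟩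

variable (S X) in
/-- Density of all orbits: `MulAction.IsMinimal` for actions of semigroups. -/
def IsMinimalAction [SMul S X] : Prop := ∀ x : X, DenseRange fun s : S => s • x

lemma IsMinimalAction.exists_finset_smul_mem [SMul S X] [ContinuousConstSMul S X]
    (hmin : IsMinimalAction S X) {U : Set X} (hU : IsOpen U) (hne : U.Nonempty) :
    ∃ G : Finset S, ∀ x, ∃ s ∈ G, s • x ∈ U := by
  obtain ⟨G, hG⟩ := isCompact_univ.elim_finite_subcover (fun s : S => (s • ·) ⁻¹' U)
    (fun s => hU.preimage (continuous_const_smul s))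
    fun x _ => mem_iUnion.2 ((hmin x).exists_mem_open hU hne)
  exact ⟨G, fun x => by simpa using hG (mem_univ x)⟩

instance [Semigroup S] [SemigroupAction S X] (F : SubMulAction S X) : SemigroupAction S F where
  mul_smul s t x := Subtype.ext (mul_smul s t (x : X))

lemma exists_isMinimalAction_subset [Semigroup S] [Nonempty S] [SemigroupAction S X]
    [ContinuousConstSMul S X] {A : Set X} (hA : IsClosed A) (hne : A.Nonempty)
    (hinv : ∀ s : S, ∀ x ∈ A, s • x ∈ A) :
    ∃ F : SubMulAction S X, (F : Set X) ⊆ A ∧ IsClosed (F : Set X) ∧ (F : Set X).Nonempty ∧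
      IsMinimalAction S F := by
  obtain ⟨F, hFA, hF⟩ := exists_minimal_isClosed_nonempty
    (P := fun B => ∀ s : S, ∀ x ∈ B, s • x ∈ B)
    (fun c _ _ hc s x hx B hB => hc B hB s x (hx B hB)) hA hne hinv
  obtain ⟨hFc, hFne, hFinv⟩ := hF.prop
  refine ⟨⟨F, fun s _ hx => hFinv s _ hx⟩, hFA, hFc, hFne, fun x => ?_⟩
  set orbit : Set X := range fun s : S => s • (x : X)
  have horbit : closure orbit ⊆ F :=
    closure_minimal (range_subset_iff.2 fun s => hFinv s x x.2) hFc
  have hinv_orbit (s : S) : ∀ y ∈ closure orbit, s • y ∈ closure orbit := fun y hy => by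
    refine map_mem_closure (continuous_const_smul s) hy ?_
    rintro _ ⟨t, rfl⟩
    exact ⟨s * t, mul_smul _ _ _⟩
  have hF_orbit : F ⊆ closure orbit :=
    hF.le_of_le ⟨isClosed_closure, (range_nonempty _).closure, hinv_orbit⟩ horbit
  refine Subtype.dense_iff.2 (hF_orbit.trans (closure_mono ?_))
  rintro _ ⟨s, rfl⟩
  exact ⟨s • x, mem_range_self s, rfl⟩

end Minimality

section Amenability

variable {S : Type*} [TopologicalSpace S]

lemma map_nonneg_of_abs_le_norm {m : (S →ᵇ ℝ) →ₗ[ℝ] ℝ} (hm : ∀ f, |m f| ≤ ‖f‖) (hm1 : m 1 = 1)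
    {f : S →ᵇ ℝ} (hf : 0 ≤ f) : 0 ≤ m f := by
  have hnorm : ‖‖f‖ • (1 : S →ᵇ ℝ) - f‖ ≤ ‖f‖ := by
    refine (BoundedContinuousFunction.norm_le (norm_nonneg f)).2 fun s => ?_
    have hfs : f s ≤ ‖f‖ := (le_abs_self _).trans (f.norm_coe_le_norm s)
    have hfs0 : 0 ≤ f s := hf s
    simpa [abs_le] using ⟨by linarith, hfs0⟩
  have hmf : m (‖f‖ • (1 : S →ᵇ ℝ) - f) ≤ ‖f‖ := (le_abs_self _).trans ((hm _).trans hnorm)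
  rw [map_sub, map_smul, hm1, smul_eq_mul, mul_one] at hmf
  linarith

lemma LeftAmenable.nonempty [Mul S] {hmulL : ∀ s : S, Continuous fun t => s * t}
    (hamen : LeftAmenable hmulL) : Nonempty S := by
  obtain ⟨m, -, hm1, -⟩ := hamen
  by_contra hS
  rw [not_nonempty_iff] at hS
  have h10 : (1 : S →ᵇ ℝ) = 0 := BoundedContinuousFunction.ext fun s => hS.elim s
  rw [h10, map_zero] at hm1
  exact zero_ne_one hm1

variable {X : Type*} [TopologicalSpace X] [CompactSpace X]

variable (S) in
/-- The pullback of continuous functions on `X` along the orbit map `s ↦ s • x`. -/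
def orbitPullback [SMul S X] [ContinuousSMul S X] (x : X) : C(X, ℝ) →ₗ[ℝ] (S →ᵇ ℝ) where
  toFun f := (BoundedContinuousFunction.mkOfCompact f).compContinuous
    ⟨fun s => s • x, continuous_id.smul continuous_const⟩
  map_add' _ _ := rfl
  map_smul' _ _ := rfl

lemma continuous_orbitPullback [SMul S X] [ContinuousSMul S X] (x : X) :
    Continuous (orbitPullback S x) :=
  (BoundedContinuousFunction.continuous_compContinuous _).comp
    (ContinuousMap.isometryEquivBoundedOfCompact X ℝ).continuous

variable [Semigroup S] [SemigroupAction S X] [ContinuousSMul S X]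

lemma lTrans_orbitPullback (hmulL : ∀ s : S, Continuous fun t => s * t) (s : S) (x : X)
    (f : C(X, ℝ)) : lTrans s (hmulL s) (orbitPullback S x f) =
      orbitPullback S x (f.comp ⟨(s • ·), continuous_const_smul s⟩) := by
  ext t
  exact congrArg f (mul_smul s t x)

lemma isLUC_orbitPullback (hmulL : ∀ s : S, Continuous fun t => s * t) (x : X) (f : C(X, ℝ)) :
    IsLUC hmulL (orbitPullback S x f) := by
  simp only [IsLUC, lTrans_orbitPullback]
  exact (continuous_orbitPullback x).comp
    (ContinuousMap.continuous_of_continuous_uncurry _ (f.continuous.comp continuous_smul))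

lemma LeftAmenable.exists_invariant_positiveLinearMap [Nonempty X]
    {hmulL : ∀ s : S, Continuous fun t => s * t} (hamen : LeftAmenable hmulL) :
    ∃ M : C(X, ℝ) →ₚ[ℝ] ℝ, M 1 = 1 ∧
      ∀ (s : S) (f : C(X, ℝ)), M (f.comp ⟨(s • ·), continuous_const_smul s⟩) = M f := by
  obtain ⟨m, hm, hm1, hinv⟩ := hamen
  obtain ⟨x⟩ := ‹Nonempty X›
  refine ⟨PositiveLinearMap.mk₀ (m ∘ₗ orbitPullback S x)
    fun f hf => map_nonneg_of_abs_le_norm hm hm1 fun s => hf (s • x), hm1, fun s f => ?_⟩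
  change m (orbitPullback S x _) = m (orbitPullback S x f)
  rw [← lTrans_orbitPullback hmulL, hinv s _ (isLUC_orbitPullback hmulL x f)]

theorem IsMinimalAction.surjective_smul [T2Space X] (hmin : IsMinimalAction S X)
    {hmulL : ∀ s : S, Continuous fun t => s * t} (hamen : LeftAmenable hmulL) (s : S) :
    Function.Surjective (s • · : X → X) := by
  intro y
  by_contra hy
  have : Nonempty X := ⟨y⟩
  obtain ⟨M, hM1, hMinv⟩ := hamen.exists_invariant_positiveLinearMap (X := X)
  obtain ⟨f, hf_range, hf_y, hf⟩ := exists_continuous_zero_one_of_isClosed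
    (isCompact_range (continuous_const_smul s)).isClosed isClosed_singleton
    (disjoint_singleton_right.2 hy)
  have hMf : M f = 0 := by
    rw [← hMinv s f, ← map_zero M]
    exact congrArg M (ContinuousMap.ext fun x => hf_range (mem_range_self x))
  have hf_half : 1 / 2 < f y := by
    rw [hf_y rfl]
    exact one_half_lt_one
  -- Finitely many translates of `f` have a sum bounded below by `1 / 2`, yet `M` kills it.
  obtain ⟨G, hG⟩ := hmin.exists_finset_smul_mem (U := {x | 1 / 2 < f x})
    (isOpen_lt continuous_const f.continuous) ⟨y, hf_half⟩
  set g : C(X, ℝ) := ∑ t ∈ G, f.comp ⟨(t • ·), continuous_const_smul t⟩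
  have hg : (1 / 2 : ℝ) • (1 : C(X, ℝ)) ≤ g := fun x => by
    obtain ⟨t, ht, htx⟩ := hG x
    have hle : f (t • x) ≤ ∑ t ∈ G, f (t • x) :=
      Finset.single_le_sum (f := fun t => f (t • x)) (fun t _ => (hf _).1) ht
    simpa [g] using htx.le.trans hle
  have hMg : M g = 0 := by simp [g, hMinv, hMf]
  have hhalf := OrderHomClass.mono M hg
  rw [map_smul, hM1, hMg] at hhalf
  norm_num at hhalf

end Amenability

section FixedPoint

variable {S X E : Type*} [Semigroup S] [TopologicalSpace S] [TopologicalSpace X]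
  [NormedAddCommGroup E] [NormedSpace ℝ E] {ι : X → E}

variable (S) in
/-- From some closed left ideal on, the elements of `S` do not increase the distance between `x`
and any other point, distances being measured after applying `ι`. This is the form in which super
asymptotic nonexpansiveness enters the argument. -/
def EventuallyNonexpansiveAt [SMul S X] (ι : X → E) (x : X) : Prop :=
  ∀ᶠ s in closedLeftIdealFilter S, ∀ y, dist (ι (s • x)) (ι (s • y)) ≤ dist (ι x) (ι y)

lemma EventuallyNonexpansiveAt.eventually_dist_smul_le [Nonempty S] [SemigroupAction S X]
    [ContinuousSMul S X] {u : X} (hu : EventuallyNonexpansiveAt S ι u)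
    (hmulL : ∀ t : S, Continuous fun s => t * s) (hrev : RightReversible S)
    (hι : Continuous fun x => toWeakSpace ℝ E (ι x))
    {U : Set X} {δ : ℝ} (hU : ∀ x ∈ U, dist (ι u) (ι x) ≤ δ) (s : S) :
    ∀ᶠ t in closedLeftIdealFilter S, ∀ x y, s • x ∈ U → s • y ∈ U →
      dist (ι (t • x)) (ι (t • y)) ≤ δ + δ := by
  have horbit (x : X) : Continuous fun t : S => toWeakSpace ℝ E (ι (t • x)) :=
    hι.comp (continuous_id.smul continuous_const)
  have hclosed : IsClosed {t : S | ∀ x y, s • x ∈ U → s • y ∈ U →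
      dist (ι (t • x)) (ι (t • y)) ≤ δ + δ} := by
    simp only [ofPred_forall]
    exact isClosed_iInter fun x => isClosed_iInter fun y => isClosed_iInter fun _ =>
      isClosed_iInter fun _ => isClosed_setOf_dist_le (horbit x) (horbit y) _
  refine hrev.eventually_of_eventually_mul_right hmulL hclosed s (hu.mono ?_)
  intro q hq x y hx hy
  simp only [mul_smul]
  exact (dist_triangle_left _ _ (ι (q • u))).trans
    (add_le_add ((hq _).trans (hU _ hx)) ((hq _).trans (hU _ hy)))

theorem IsMinimalAction.totallyBounded_range [SemigroupAction S X] [ContinuousSMul S X]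
    [CompactSpace X] [Nonempty X] [Nonempty S] (hmin : IsMinimalAction S X)
    (hsurj : ∀ s : S, Function.Surjective (s • · : X → X))
    (hmulL : ∀ t : S, Continuous fun s => t * s) (hrev : RightReversible S)
    (hι : Continuous fun x => toWeakSpace ℝ E (ι x))
    (hnonexp : ∀ x, EventuallyNonexpansiveAt S ι x) :
    TotallyBounded (range ι) := by
  refine Metric.totallyBounded_iff.2 fun ε hε => ?_
  obtain ⟨U, hUo, ⟨u, hu⟩, hU⟩ := exists_isOpen_forall_dist_le hι (show 0 < ε / 3 by positivity)
  obtain ⟨G, hG⟩ := hmin.exists_finset_smul_mem hUo ⟨u, hu⟩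
  have := hrev.neBot_closedLeftIdealFilter
  obtain ⟨t, ht⟩ := ((Finset.eventually_all G).2 fun s _ =>
    (hnonexp u).eventually_dist_smul_le hmulL hrev hι (hU u hu) s).exists
  obtain ⟨c, hc⟩ : ∃ c : S → X, ∀ s, s • c s = u := Classical.skolem.1 fun s => hsurj s u
  refine ⟨(fun s => ι (t • c s)) '' G, G.finite_toSet.image _, ?_⟩
  rintro _ ⟨y, rfl⟩
  obtain ⟨x, rfl⟩ := hsurj t y
  obtain ⟨s, hsG, hsx⟩ := hG x
  have hdist : dist (ι (t • x)) (ι (t • c s)) ≤ ε / 3 + ε / 3 :=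
    ht s hsG x (c s) hsx ((hc s).symm ▸ hu)
  exact mem_biUnion (mem_image_of_mem _ hsG) (mem_ball.2 (by linarith))

lemma EventuallyNonexpansiveAt.limitSet_subset_iInter_closedBall [SMul S X] {x : X}
    (hx : EventuallyNonexpansiveAt S ι x) (hι : Continuous fun x => toWeakSpace ℝ E (ι x))
    {F : Set X} (hF : ∀ s : S, SurjOn (s • ·) F F) {r : ℝ}
    (hxr : x ∈ ι ⁻¹' ⋂ y ∈ F, closedBall (ι y) r) :
    limitSet S x ⊆ ι ⁻¹' ⋂ y ∈ F, closedBall (ι y) r := by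
  refine limitSet_subset_of_eventually (isClosed_preimage_of_convex hι
    (convex_iInter₂ fun _ _ => convex_closedBall _ _)
    (isClosed_biInter fun _ _ => isClosed_closedBall)) (hx.mono fun s hs => ?_)
  refine mem_iInter₂.2 fun y hy => ?_
  obtain ⟨z, hz, rfl⟩ := hF s hy
  exact (hs z).trans (mem_iInter₂.1 hxr z hz)

theorem exists_minimal_convex_limitSet_subset [SMul S X] [CompactSpace X] [Nonempty X]
    (hinj : Function.Injective ι) (hconv : Convex ℝ (range ι)) :
    ∃ C : Set X, Minimal (fun C => IsClosed C ∧ C.Nonempty ∧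
      Convex ℝ (ι '' C) ∧ ∀ x ∈ C, limitSet S x ⊆ C) C := by
  let P (C : Set X) : Prop := Convex ℝ (ι '' C) ∧ ∀ x ∈ C, limitSet S x ⊆ C
  have hP (c : Set (Set X)) (hcne : c.Nonempty) (hc : ∀ A ∈ c, P A) : P (⋂₀ c) := by
    refine ⟨?_, fun x hx => subset_sInter fun A hA => (hc A hA).2 x (hx A hA)⟩
    rw [sInter_eq_biInter, hinj.injOn.image_biInter_eq hcne]
    exact convex_iInter₂ fun A hA => (hc A hA).1
  obtain ⟨C, -, hC⟩ := exists_minimal_isClosed_nonempty (fun c hcne _ => hP c hcne)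
    isClosed_univ univ_nonempty ⟨by rwa [image_univ], fun _ _ => subset_univ _⟩
  exact ⟨C, hC⟩

lemma subsingleton_of_minimal_convex [SMul S X] {C : Set X}
    (hC : Minimal (fun C => IsClosed C ∧ C.Nonempty ∧
      Convex ℝ (ι '' C) ∧ ∀ x ∈ C, limitSet S x ⊆ C) C)
    (hι : Continuous fun x => toWeakSpace ℝ E (ι x))
    (hnonexp : ∀ x, EventuallyNonexpansiveAt S ι x)
    {F : Set X} (hFC : F ⊆ C) (hF : ∀ s : S, SurjOn (s • ·) F F)
    (htb : TotallyBounded (ι '' F)) : (ι '' F).Subsingleton := by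
  obtain ⟨hCc, -, hCconv, hClim⟩ := hC.prop
  by_contra hnontriv
  obtain ⟨u, hu, r, hr, hur⟩ :=
    exists_mem_convexHull_subset_closedBall htb (not_subsingleton_iff.1 hnontriv)
  set D : Set E := ⋂ y ∈ F, closedBall (ι y) r
  have hDconv : Convex ℝ D := convex_iInter₂ fun _ _ => convex_closedBall _ _
  have hDclosed : IsClosed D := isClosed_biInter fun _ _ => isClosed_closedBall
  obtain ⟨v, hvC, rfl⟩ : u ∈ ι '' C := convexHull_min (image_mono hFC) hCconv hu
  have hvD : v ∈ ι ⁻¹' D :=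
    mem_iInter₂.2 fun y hy => mem_closedBall_comm.1 (hur (mem_image_of_mem ι hy))
  have hCD : C ⊆ C ∩ ι ⁻¹' D := hC.le_of_le
    ⟨hCc.inter (isClosed_preimage_of_convex hι hDconv hDclosed), ⟨v, hvC, hvD⟩,
      by rw [image_inter_preimage]; exact hCconv.inter hDconv,
      fun x hx => subset_inter (hClim x hx.1)
        ((hnonexp x).limitSet_subset_iInter_closedBall hι hF hx.2)⟩ inter_subset_left
  have hr0 : 0 ≤ r := by
    obtain ⟨y, hy⟩ := convexHull_nonempty_iff.1 ⟨_, hu⟩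
    exact dist_nonneg.trans (hur hy)
  refine hr.not_ge (diam_le_of_forall_dist_le hr0 ?_)
  rintro _ ⟨p, hp, rfl⟩ _ ⟨q, hq, rfl⟩
  exact mem_iInter₂.1 (hCD (hFC hp)).2 q hq

theorem exists_common_fixed_point [SemigroupAction S X] [ContinuousSMul S X] [CompactSpace X]
    [Nonempty X] {hmulL : ∀ t : S, Continuous fun s => t * s} (hrev : RightReversible S)
    (hamen : LeftAmenable hmulL) (hinj : Function.Injective ι)
    (hι : Continuous fun x => toWeakSpace ℝ E (ι x)) (hconv : Convex ℝ (range ι))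
    (hnonexp : ∀ x, EventuallyNonexpansiveAt S ι x) :
    ∃ x : X, ∀ s : S, s • x = x := by
  have : T2Space X := .of_injective_continuous ((toWeakSpace ℝ E).injective.comp hinj) hι
  have := hamen.nonempty
  obtain ⟨C, hC⟩ := exists_minimal_convex_limitSet_subset (S := S) hinj hconv
  obtain ⟨-, ⟨x₀, hx₀⟩, -, hClim⟩ := hC.prop
  obtain ⟨F, hFlim, hFc, hFne, hFmin⟩ := exists_isMinimalAction_subset (isClosed_limitSet x₀)
    (limitSet_nonempty hrev x₀) fun (s : S) _ => smul_mem_limitSet s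
  have : CompactSpace F := isCompact_iff_compactSpace.1 hFc.isCompact
  have : Nonempty F := hFne.to_subtype
  have hsurj (s : S) : Function.Surjective (s • · : F → F) := hFmin.surjective_smul hamen s
  have hF (s : S) : SurjOn (s • ·) (F : Set X) F := fun y hy => by
    obtain ⟨x, hx⟩ := hsurj s ⟨y, hy⟩
    exact ⟨x, x.2, congrArg Subtype.val hx⟩
  have htb : TotallyBounded (ι '' F) := by
    rw [image_eq_range]
    exact hFmin.totallyBounded_range hsurj hmulL hrev (hι.comp continuous_subtype_val)
      fun x => (hnonexp x).mono fun s hs y => hs y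
  have hsub := subsingleton_of_minimal_convex hC hι hnonexp (hFlim.trans (hClim x₀ hx₀)) hF htb
  obtain ⟨x, hx⟩ := hFne
  exact ⟨x, fun s => hinj (hsub (mem_image_of_mem ι (F.smul_mem s hx)) (mem_image_of_mem ι hx))⟩

end FixedPoint

theorem common_fixed_point_weakly_compact_general
    {S E : Type*} [Semigroup S] [TopologicalSpace S] [NormedAddCommGroup E] [NormedSpace ℝ E]
    {hmulL : ∀ t : S, Continuous fun s => t * s}
    (hrev : RightReversible S) (hamen : LeftAmenable hmulL)
    {K : Set E} (hKne : K.Nonempty) (hKconv : Convex ℝ K)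
    (hKcomp : IsCompact (toWeakSpace ℝ E '' K))
    {act : S → E → E} (hmaps : ∀ s : S, MapsTo (act s) K K)
    (haction : ∀ s t : S, ∀ x ∈ K, act (s * t) x = act s (act t x))
    (hjoint : ContinuousOn
      (fun p : S × WeakSpace ℝ E => toWeakSpace ℝ E (act p.1 ((toWeakSpace ℝ E).symm p.2)))
      (univ ×ˢ (toWeakSpace ℝ E '' K)))
    (hnonexp : ∀ x ∈ K, ∃ I : Set S, IsLeftIdeal I ∧
      ∀ s ∈ I, ∀ y ∈ K, ‖act s x - act s y‖ ≤ ‖x - y‖) :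
    ∃ x₀ ∈ K, ∀ s : S, act s x₀ = x₀ := by
  let X := ↥(toWeakSpace ℝ E '' K)
  let ι : X → E := fun x => (toWeakSpace ℝ E).symm x
  have hιK (x : X) : ι x ∈ K := by
    obtain ⟨_, y, hy, rfl⟩ := x
    exact hy
  have hrange : range ι = K :=
    subset_antisymm (range_subset_iff.2 hιK) fun y hy => ⟨⟨_, y, hy, rfl⟩, rfl⟩
  have hinj : Function.Injective ι := (toWeakSpace ℝ E).symm.injective.comp Subtype.val_injective
  have hι : Continuous fun x => toWeakSpace ℝ E (ι x) := continuous_subtype_val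
  let _ : SemigroupAction S X :=
    { smul s x := ⟨toWeakSpace ℝ E (act s (ι x)), _, hmaps s (hιK x), rfl⟩
      mul_smul s t x := hinj (haction s t _ (hιK x)) }
  have : ContinuousSMul S X := ⟨Continuous.subtype_mk (hjoint.comp_continuous
    (continuous_fst.prodMk (continuous_subtype_val.comp continuous_snd))
    fun p => ⟨mem_univ _, p.2.2⟩) _⟩
  have : CompactSpace X := isCompact_iff_compactSpace.1 hKcomp
  have : Nonempty X := (hKne.image _).to_subtype
  have horbit (x : X) : Continuous fun s : S => toWeakSpace ℝ E (ι (s • x)) :=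
    hι.comp (continuous_id.smul continuous_const)
  obtain ⟨x, hx⟩ := exists_common_fixed_point hrev hamen hinj hι (hrange.symm ▸ hKconv) fun x => by
    obtain ⟨I, hI, hIx⟩ := hnonexp (ι x) (hιK x)
    refine hI.eventually_of_isClosed hmulL ?_ fun s hs y => ?_
    · simp only [ofPred_forall]
      exact isClosed_iInter fun y => isClosed_setOf_dist_le (horbit x) (horbit y) _
    · change dist (act s (ι x)) (act s (ι y)) ≤ dist (ι x) (ι y)
      simpa only [dist_eq_norm] using hIx s hs (ι y) (hιK y)
  exact ⟨ι x, hιK x, fun s => congrArg ι (hx s)⟩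

/-- let `S` be a right reversible and left amenable semitopological
semigroup and `K` a nonempty weakly compact convex subset of a Banach space.  Every
jointly weakly continuous, super asymptotically nonexpansive action of `S` on `K` has a
common fixed point. -/
theorem common_fixed_point_weakly_compact
    {S E : Type*} [Semigroup S] [TopologicalSpace S] [T2Space S]
    [NormedAddCommGroup E] [NormedSpace ℝ E] [CompleteSpace E]
    -- `S` is a semitopological semigroup: multiplication is separately continuous
    (hmulL : ∀ t : S, Continuous fun s => t * s)
    (hmulR : ∀ t : S, Continuous fun s => s * t)
    (hrev : RightReversible S)
    (hamen : LeftAmenable hmulL)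
    (K : Set E) (hKne : K.Nonempty) (hKconv : Convex ℝ K)
    -- `K` is weakly compact
    (hKcomp : IsCompact (toWeakSpace ℝ E '' K))
    (act : S → E → E) (hmaps : ∀ s : S, Set.MapsTo (act s) K K)
    (haction : ∀ s t : S, ∀ x ∈ K, act (s * t) x = act s (act t x))
    -- the action is jointly weakly continuous
    (hjoint : ContinuousOn
      (fun p : S × WeakSpace ℝ E => toWeakSpace ℝ E (act p.1 ((toWeakSpace ℝ E).symm p.2)))
      (Set.univ ×ˢ (toWeakSpace ℝ E '' K)))
    (hsan : SuperAsympNonexpansive act K) :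
    ∃ x₀ ∈ K, ∀ s : S, act s x₀ = x₀ := by
  obtain ⟨t⟩ := hamen.nonempty
  exact common_fixed_point_weakly_compact_general hrev hamen hKne hKconv hKcomp hmaps haction
    hjoint fun x hx => (hsan x hx t).imp fun _ hI => ⟨hI.1, hI.2.2⟩
end

section
/- Let S be a strongly left reversible semitopological semigroup (every separable closed subsemigroup of S is left reversible) and K a weakly compact convex subset of a Banach space. Then every separately weakly continuous nonexpansive action of S on K has a common fixed point. -/
/-!
Suppose first that `S` is separable and left reversible. For a suitable separable subspace `V` the
closure of `K ∩ V` is invariant, and it contains a minimal nonempty closed convex invariant set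
`M`, which is thus norm separable. Left reversibility makes the sets `closure (I • M)`, `I` a closed
right ideal, a directed family, and by weak compactness their intersection `Z` satisfies
`Z ⊆ s • Z` for all `s`; shrink `Z` to a minimal weakly closed nonempty set with this property. By
Baire's theorem for the weak topology and norm separability, the points of `Z` without weak
neighbourhoods that have a finite `ε`-net form a proper subset of `Z`. This subset inherits the
property of `Z`, so it is empty, and `Z` is norm totally bounded. If `Z` had two points, DeMarr's
lemma would give a point of `M` at distance at most some `r < diam Z` from all of `Z`. The points of
`M` with this property form a closed convex invariant set, hence all of `M ⊇ Z`, which is absurd.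
So `Z` is a singleton, and its element is fixed.

For general `S`, the fixed point sets of the elements of `S` are weakly compact, and finitely many
of them meet because finitely many elements generate a separable closed subsemigroup, which is left
reversible.
-/

open Set TopologicalSpace Topology
open scoped Pointwise

section LeftReversible

/-- The nonempty closed right ideals of a semigroup with a topology. -/
def closedRightIdeals (S : Type*) [Mul S] [TopologicalSpace S] : Set (Set S) :=
  {I | I.Nonempty ∧ (∀ i ∈ I, ∀ s, i * s ∈ I) ∧ IsClosed I}

/-- A semigroup with a topology is left reversible if any two of its nonempty closed right ideals
intersect. -/
def IsLeftReversible (S : Type*) [Mul S] [TopologicalSpace S] : Prop :=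
  ∀ I ∈ closedRightIdeals S, ∀ J ∈ closedRightIdeals S, (I ∩ J).Nonempty

/-- A semigroup with a topology is strongly left reversible if each of its separable closed
subsemigroups is left reversible. -/
def IsStronglyLeftReversible (S : Type*) [Mul S] [TopologicalSpace S] : Prop :=
  ∀ A : Subsemigroup S, IsClosed (A : Set S) → IsSeparable (A : Set S) → IsLeftReversible A

theorem univ_mem_closedRightIdeals (S : Type*) [Mul S] [TopologicalSpace S] [Nonempty S] :
    univ ∈ closedRightIdeals S :=
  ⟨univ_nonempty, fun _ _ _ => mem_univ _, isClosed_univ⟩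

theorem closure_smul_mem_closedRightIdeals {S : Type*} [Semigroup S] [TopologicalSpace S]
    [SeparatelyContinuousMul S] {I : Set S} (hI : I ∈ closedRightIdeals S) (s : S) :
    closure (s • I) ∈ closedRightIdeals S := by
  obtain ⟨hne, hmul, -⟩ := hI
  refine ⟨hne.smul_set.closure, fun i hi a => ?_, isClosed_closure⟩
  refine map_mem_closure (f := (· * a)) (continuous_mul_const a) hi ?_
  rintro _ ⟨t, ht, rfl⟩
  exact ⟨t * a, hmul t ht a, (mul_assoc s t a).symm⟩

theorem IsLeftReversible.directedOn_closedRightIdeals {S : Type*} [Mul S] [TopologicalSpace S]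
    (hS : IsLeftReversible S) : DirectedOn (· ⊇ ·) (closedRightIdeals S) :=
  fun I hI J hJ => ⟨I ∩ J,
    ⟨hS I hI J hJ, fun i hi s => ⟨hI.2.1 i hi.1 s, hJ.2.1 i hi.2 s⟩, hI.2.2.inter hJ.2.2⟩,
    inter_subset_left, inter_subset_right⟩

theorem isStronglyLeftReversible_of_forall_set {S : Type*} [Mul S] [TopologicalSpace S]
    (h : ∀ A : Set S, A.Nonempty → (∀ a ∈ A, ∀ b ∈ A, a * b ∈ A) → IsClosed A → IsSeparable A →
      ∀ I J : Set S, I ⊆ A → J ⊆ A → I.Nonempty → J.Nonempty →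
        (∀ i ∈ I, ∀ a ∈ A, i * a ∈ I) → (∀ j ∈ J, ∀ a ∈ A, j * a ∈ J) →
        IsClosed I → IsClosed J → (I ∩ J).Nonempty) :
    IsStronglyLeftReversible S := by
  rintro A hA hAsep I ⟨hIne, hImul, hIcl⟩ J ⟨hJne, hJmul, hJcl⟩
  have image_mul {I : Set A} (hI : ∀ i ∈ I, ∀ a, i * a ∈ I) :
      ∀ i ∈ Subtype.val '' I, ∀ a ∈ A, i * a ∈ Subtype.val '' I := by
    rintro _ ⟨i, hi, rfl⟩ a ha
    exact ⟨i * ⟨a, ha⟩, hI i hi _, rfl⟩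
  have hval : IsClosedMap (Subtype.val : A → S) := hA.isClosedEmbedding_subtypeVal.isClosedMap
  have hinter := h A ((hIne.image _).mono (Subtype.coe_image_subset _ I))
    (fun _ ha _ hb => A.mul_mem ha hb) hA hAsep _ _ (Subtype.coe_image_subset _ I)
    (Subtype.coe_image_subset _ J) (hIne.image _) (hJne.image _) (image_mul hImul)
    (image_mul hJmul) (hval I hIcl) (hval J hJcl)
  rwa [← image_inter Subtype.val_injective, image_nonempty] at hinter

theorem countable_subsemigroupClosure {S : Type*} [Semigroup S] {s : Set S} (hs : s.Countable) :
    (Subsemigroup.closure s : Set S).Countable := by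
  have : Countable s := hs.to_subtype
  have : Countable (FreeSemigroup s) := FreeSemigroup.toFreeMonoid_injective.countable
  have hle : Subsemigroup.closure s ≤ (FreeSemigroup.lift ((↑) : s → S)).srange :=
    Subsemigroup.closure_le.2 fun x hx => ⟨FreeSemigroup.of ⟨x, hx⟩, FreeSemigroup.lift_of _ _⟩
  exact (countable_range (FreeSemigroup.lift ((↑) : s → S))).mono hle

theorem separableSpace_closure_of_countable {X : Type*} [TopologicalSpace X] {s : Set X}
    (hs : s.Countable) : SeparableSpace (closure s) :=
  have : Countable s := hs.to_subtype
  (denseRange_inclusion_iff subset_closure).2 subset_rfl |>.separableSpace (continuous_inclusion _)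

end LeftReversible

section Coinvariant

theorem image_iInter_of_directed_of_isCompact {X Y ι : Type*} [TopologicalSpace X]
    [TopologicalSpace Y] [T1Space Y] [Nonempty ι] {f : X → Y} (hf : Continuous f) {A : ι → Set X}
    (hdir : Directed (· ⊇ ·) A) (hcpt : ∀ i, IsCompact (A i)) (hcl : ∀ i, IsClosed (A i)) :
    f '' ⋂ i, A i = ⋂ i, f '' A i := by
  refine (image_iInter_subset A f).antisymm fun y hy => ?_
  have hfib : IsClosed (f ⁻¹' {y}) := isClosed_singleton.preimage hf
  obtain ⟨x, hx⟩ : (⋂ i, A i ∩ f ⁻¹' {y}).Nonempty :=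
    IsCompact.nonempty_iInter_of_directed_nonempty_isCompact_isClosed _
      (fun i j => let ⟨k, hi, hj⟩ := hdir i j
        ⟨k, inter_subset_inter_left _ hi, inter_subset_inter_left _ hj⟩)
      (fun i => mem_iInter.1 hy i) (fun i => (hcpt i).inter_right hfib)
      (fun i => (hcl i).inter hfib)
  rw [← iInter_inter] at hx
  exact ⟨x, hx⟩

/-- A set is coinvariant if every element of the semigroup maps it onto a superset of itself. -/
def IsCoinvariant (S : Type*) {X : Type*} [SMul S X] (Z : Set X) : Prop :=
  ∀ s : S, Z ⊆ s • Z

variable {S X : Type*} [TopologicalSpace X] [CompactSpace X]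

theorem IsCoinvariant.iInter_of_directed [T1Space X] [SMul S X] [ContinuousConstSMul S X]
    {ι : Type*} [Nonempty ι] {Z : ι → Set X} (hZ : ∀ i, IsCoinvariant S (Z i))
    (hdir : Directed (· ⊇ ·) Z) (hcl : ∀ i, IsClosed (Z i)) : IsCoinvariant S (⋂ i, Z i) := by
  intro s
  rw [← image_smul, image_iInter_of_directed_of_isCompact (continuous_const_smul s) hdir
    (fun i => (hcl i).isCompact) hcl]
  exact iInter_mono fun i => hZ i s

theorem exists_minimal_isCoinvariant [T1Space X] [SMul S X] [ContinuousConstSMul S X] {Z₀ : Set X}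
    (hne : Z₀.Nonempty) (hcl : IsClosed Z₀) (hco : IsCoinvariant S Z₀) :
    ∃ Z, Minimal (fun Z : Set X => Z.Nonempty ∧ IsClosed Z ∧ IsCoinvariant S Z) Z := by
  suffices h : ∀ c ⊆ {Z : Set X | Z.Nonempty ∧ IsClosed Z ∧ IsCoinvariant S Z},
      IsChain (· ⊆ ·) c → c.Nonempty →
        ∃ lb ∈ {Z : Set X | Z.Nonempty ∧ IsClosed Z ∧ IsCoinvariant S Z}, ∀ Z ∈ c, lb ⊆ Z from
    let ⟨Z, _, hZ⟩ := zorn_superset_nonempty _ h Z₀ ⟨hne, hcl, hco⟩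
    ⟨Z, hZ⟩
  intro c hc hchain hcne
  have : Nonempty c := hcne.to_subtype
  have hdir : DirectedOn (· ⊇ ·) c := IsChain.directedOn hchain.symm
  refine ⟨⋂₀ c, ⟨?_, isClosed_sInter fun Z hZ => (hc hZ).2.1, ?_⟩,
    fun _ => sInter_subset_of_mem⟩
  · exact IsCompact.nonempty_sInter_of_directed_nonempty_isCompact_isClosed hdir
      (fun Z hZ => (hc hZ).1) (fun Z hZ => (hc hZ).2.1.isCompact)
      (fun Z hZ => (hc hZ).2.1)
  · rw [sInter_eq_iInter]
    exact .iInter_of_directed (fun Z => (hc Z.2).2.2) hdir.directed_val (fun Z => (hc Z.2).2.1)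

variable [T2Space X] [Semigroup S] [TopologicalSpace S] [SemigroupAction S X]
  [ContinuousConstSMul S X]

theorem closure_smul_univ_subset (hcont : ∀ x : X, Continuous fun s : S => s • x)
    (s : S) (I : Set S) :
    closure (closure (s • I) • (univ : Set X)) ⊆ s • closure (I • (univ : Set X)) := by
  have hcl : IsClosed (s • closure (I • (univ : Set X))) :=
    (isClosed_closure.isCompact.image (continuous_const_smul s)).isClosed
  refine closure_minimal ?_ hcl
  rintro _ ⟨t, ht, x, -, rfl⟩
  refine hcl.closure_subset (map_mem_closure (f := fun s : S => s • x) (hcont x) ht ?_)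
  rintro _ ⟨u, hu, rfl⟩
  exact ⟨u • x, subset_closure ⟨u, hu, x, mem_univ x, rfl⟩, (mul_smul s u x).symm⟩

theorem IsLeftReversible.exists_isCoinvariant [SeparatelyContinuousMul S] [Nonempty X]
    (hS : IsLeftReversible S) (hcont : ∀ x : X, Continuous fun s : S => s • x) :
    ∃ Z : Set X, Z.Nonempty ∧ IsClosed Z ∧ IsCoinvariant S Z := by
  rcases isEmpty_or_nonempty S with hempty | hne
  · exact ⟨univ, univ_nonempty, isClosed_univ, hempty.elim⟩
  have : Nonempty (closedRightIdeals S) := ⟨⟨univ, univ_mem_closedRightIdeals S⟩⟩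
  let B (I : closedRightIdeals S) : Set X := closure (I.1 • univ)
  have hdir : Directed (· ⊇ ·) B := fun I J =>
    let ⟨L, hI, hJ⟩ := hS.directedOn_closedRightIdeals.directed_val I J
    ⟨L, closure_mono (smul_subset_smul_right hI), closure_mono (smul_subset_smul_right hJ)⟩
  have hcl (I) : IsClosed (B I) := isClosed_closure
  refine ⟨⋂ I, B I, ?_, isClosed_iInter hcl, fun s => ?_⟩
  · exact IsCompact.nonempty_iInter_of_directed_nonempty_isCompact_isClosed B hdir
      (fun I => (I.2.1.smul univ_nonempty).closure) (fun I => (hcl I).isCompact) hcl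
  · rw [← image_smul, image_iInter_of_directed_of_isCompact (continuous_const_smul s) hdir
      (fun I => (hcl I).isCompact) hcl]
    exact subset_iInter fun I =>
      (iInter_subset B ⟨_, closure_smul_mem_closedRightIdeals I.2 s⟩).trans
        (closure_smul_univ_subset hcont s I.1)

end Coinvariant

section FiniteNet

variable {X E : Type*} [PseudoMetricSpace E]

/-- A set `A` has a finite `ε`-net for the pseudometric induced by a map `j : X → E`. The net
consists of points of `X`, not necessarily of `A`, so that it is carried along by self-maps of `X`
which are nonexpansive for this pseudometric. -/
def HasFiniteNet (j : X → E) (ε : ℝ) (A : Set X) : Prop :=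
  ∃ t : Set X, t.Finite ∧ ∀ a ∈ A, ∃ x ∈ t, dist (j a) (j x) ≤ ε

variable {j : X → E} {ε : ℝ} {A B : Set X}

theorem HasFiniteNet.mono (hB : HasFiniteNet j ε B) (hAB : A ⊆ B) : HasFiniteNet j ε A :=
  let ⟨t, ht, hBt⟩ := hB
  ⟨t, ht, fun a ha => hBt a (hAB ha)⟩

theorem hasFiniteNet_empty : HasFiniteNet j ε (∅ : Set X) :=
  ⟨∅, finite_empty, fun _ => False.elim⟩

theorem HasFiniteNet.union (hA : HasFiniteNet j ε A) (hB : HasFiniteNet j ε B) :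
    HasFiniteNet j ε (A ∪ B) := by
  obtain ⟨s, hs, hAs⟩ := hA
  obtain ⟨t, ht, hBt⟩ := hB
  refine ⟨s ∪ t, hs.union ht, ?_⟩
  rintro a (ha | ha)
  · obtain ⟨x, hx, hax⟩ := hAs a ha
    exact ⟨x, .inl hx, hax⟩
  · obtain ⟨x, hx, hax⟩ := hBt a ha
    exact ⟨x, .inr hx, hax⟩

theorem HasFiniteNet.image (hA : HasFiniteNet j ε A) {g : X → X}
    (hg : ∀ x y, dist (j (g x)) (j (g y)) ≤ dist (j x) (j y)) : HasFiniteNet j ε (g '' A) := by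
  obtain ⟨t, ht, hAt⟩ := hA
  refine ⟨g '' t, ht.image g, ?_⟩
  rintro _ ⟨a, ha, rfl⟩
  obtain ⟨x, hx, hax⟩ := hAt a ha
  exact ⟨g x, mem_image_of_mem g hx, (hg a x).trans hax⟩

theorem totallyBounded_image_of_forall_hasFiniteNet (hA : ∀ ε > 0, HasFiniteNet j ε A) :
    TotallyBounded (j '' A) := by
  refine Metric.totallyBounded_iff.2 fun ε hε => ?_
  obtain ⟨t, ht, hAt⟩ := hA (ε / 2) (half_pos hε)
  refine ⟨j '' t, ht.image j, ?_⟩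
  rintro _ ⟨a, ha, rfl⟩
  obtain ⟨x, hx, hax⟩ := hAt a ha
  exact mem_biUnion (mem_image_of_mem j hx) (hax.trans_lt (half_lt_self hε))

variable [TopologicalSpace X]

/-- The points of `Z` none of whose neighbourhoods in `Z` has a finite `ε`-net. -/
def noFiniteNetPart (j : X → E) (ε : ℝ) (Z : Set X) : Set X :=
  {z ∈ Z | ∀ U ∈ 𝓝 z, ¬HasFiniteNet j ε (U ∩ Z)}

variable {Z : Set X}

theorem noFiniteNetPart_subset : noFiniteNetPart j ε Z ⊆ Z :=
  fun _ hz => hz.1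

theorem exists_mem_nhdsSet_hasFiniteNet {C : Set X} (hC : IsCompact C) (hCZ : C ⊆ Z)
    (hdisj : Disjoint C (noFiniteNetPart j ε Z)) : ∃ U ∈ 𝓝ˢ C, HasFiniteNet j ε (U ∩ Z) := by
  refine hC.induction_on (p := fun C => ∃ U ∈ 𝓝ˢ C, HasFiniteNet j ε (U ∩ Z))
    ⟨∅, by simp, by simpa using hasFiniteNet_empty⟩ ?_ ?_ fun x hx => ?_
  · rintro A B hAB ⟨U, hU, hnet⟩
    exact ⟨U, nhdsSet_mono hAB hU, hnet⟩
  · rintro A B ⟨U, hU, hUnet⟩ ⟨V, hV, hVnet⟩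
    exact ⟨U ∪ V, union_mem_nhdsSet hU hV, by
      simpa only [union_inter_distrib_right] using hUnet.union hVnet⟩
  · obtain ⟨U, hU, hnet⟩ : ∃ U ∈ 𝓝 x, HasFiniteNet j ε (U ∩ Z) := by
      simpa [noFiniteNetPart, hCZ hx] using disjoint_left.1 hdisj hx
    obtain ⟨V, hVU, hV, hxV⟩ := mem_nhds_iff.1 hU
    exact ⟨V, mem_nhdsWithin_of_mem_nhds (hV.mem_nhds hxV), U,
      Filter.mem_of_superset hV.mem_nhdsSet_self hVU, hnet⟩

theorem isClosed_noFiniteNetPart (hZ : IsClosed Z) : IsClosed (noFiniteNetPart j ε Z) := by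
  have hcl : IsClosed {z | ∀ U ∈ 𝓝 z, ¬HasFiniteNet j ε (U ∩ Z)} := by
    refine isOpen_compl_iff.1 (isOpen_iff_mem_nhds.2 fun z hz => ?_)
    obtain ⟨U, hU, hnet⟩ : ∃ U ∈ 𝓝 z, HasFiniteNet j ε (U ∩ Z) := by
      simpa only [mem_compl_iff, mem_ofPred_eq, not_forall, not_not, exists_prop] using hz
    filter_upwards [eventually_mem_nhds_iff.2 hU] with y hy h
    exact h U hy hnet
  exact hZ.inter hcl

theorem noFiniteNetPart_ne_self [CompactSpace X] [T2Space X] (hZ : IsClosed Z) (hne : Z.Nonempty)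
    (hball : ∀ e, IsClosed (j ⁻¹' Metric.closedBall e ε)) (hsep : IsSeparable (range j))
    (hε : 0 < ε) : noFiniteNetPart j ε Z ≠ Z := by
  have : CompactSpace Z := isCompact_iff_compactSpace.1 hZ.isCompact
  have : Nonempty Z := hne.to_subtype
  obtain ⟨D, hDj, hD, hdense⟩ := hsep.exists_countable_dense_subset
  have : Countable D := hD.to_subtype
  obtain ⟨⟨_, hx⟩, z, hz⟩ := nonempty_interior_of_iUnion_of_closed
    (f := fun e : D => ((↑) : Z → X) ⁻¹' (j ⁻¹' Metric.closedBall e ε))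
    (fun e => (hball e).preimage continuous_subtype_val) <| iUnion_eq_univ_iff.2 fun z => by
      obtain ⟨e, he, hdist⟩ := Metric.mem_closure_iff.1 (hdense (mem_range_self z.1)) ε hε
      exact ⟨⟨e, he⟩, hdist.le⟩
  obtain ⟨x, rfl⟩ := hDj hx
  obtain ⟨U, hU, hUball⟩ := (mem_nhds_subtype _ _ _).1 (mem_interior_iff_mem_nhds.1 hz)
  intro heq
  have hzN : z.1 ∈ noFiniteNetPart j ε Z := heq.symm ▸ z.2
  exact hzN.2 U hU ⟨{x}, finite_singleton _, fun a ha => ⟨x, rfl, hUball (a := ⟨a, ha.2⟩) ha.1⟩⟩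

end FiniteNet

section TotallyBounded

variable {S X E : Type*} [TopologicalSpace X] [CompactSpace X] [T2Space X] [PseudoMetricSpace E]
  {j : X → E} {ε : ℝ} {Z : Set X}

theorem IsCoinvariant.noFiniteNetPart [SMul S X] [ContinuousConstSMul S X]
    (hco : IsCoinvariant S Z) (hZ : IsClosed Z)
    (hj : ∀ (s : S) x y, dist (j (s • x)) (j (s • y)) ≤ dist (j x) (j y)) :
    IsCoinvariant S (noFiniteNetPart j ε Z) := by
  intro s z hz
  by_contra hcon
  have hfib : IsClosed (Z ∩ (s • ·) ⁻¹' {z}) :=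
    hZ.inter (isClosed_singleton.preimage (continuous_const_smul s))
  obtain ⟨U, hU, hnet⟩ := exists_mem_nhdsSet_hasFiniteNet (j := j) (ε := ε) hfib.isCompact
    inter_subset_left (disjoint_left.2 fun x hx hxN => hcon ⟨x, hxN, hx.2⟩)
  obtain ⟨V, hV, hfibV, hVU⟩ := mem_nhdsSet_iff_exists.1 hU
  have himage : IsClosed (s • (Z \ V)) :=
    ((hZ.sdiff hV).isCompact.image (continuous_const_smul s)).isClosed
  refine hz.2 (s • (Z \ V))ᶜ (himage.isOpen_compl.mem_nhds ?_) ((hnet.image (hj s)).mono ?_)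
  · rintro ⟨x, hx, hxz⟩
    exact hx.2 (hfibV ⟨hx.1, hxz⟩)
  · rintro y ⟨hy, hyZ⟩
    obtain ⟨x, hx, rfl⟩ := hco s hyZ
    exact ⟨x, ⟨hVU (of_not_not fun hxV => hy ⟨x, ⟨hx, hxV⟩, rfl⟩), hx⟩, rfl⟩

theorem totallyBounded_image_of_minimal_isCoinvariant [SMul S X] [ContinuousConstSMul S X]
    (hZ : Minimal (fun Z : Set X => Z.Nonempty ∧ IsClosed Z ∧ IsCoinvariant S Z) Z)
    (hj : ∀ (s : S) x y, dist (j (s • x)) (j (s • y)) ≤ dist (j x) (j y))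
    (hball : ∀ e r, IsClosed (j ⁻¹' Metric.closedBall e r)) (hsep : IsSeparable (range j)) :
    TotallyBounded (j '' Z) := by
  obtain ⟨hne, hcl, hco⟩ := hZ.prop
  refine totallyBounded_image_of_forall_hasFiniteNet fun ε hε => ?_
  have hempty : noFiniteNetPart j ε Z = ∅ := by
    by_contra! hN
    exact noFiniteNetPart_ne_self hcl hne (hball · ε) hsep hε <| hZ.eq_of_subset
      ⟨hN, isClosed_noFiniteNetPart hcl, hco.noFiniteNetPart hcl hj⟩ noFiniteNetPart_subset
  obtain ⟨U, hU, hnet⟩ := exists_mem_nhdsSet_hasFiniteNet (j := j) (ε := ε) hcl.isCompact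
    subset_rfl (hempty ▸ disjoint_empty Z)
  exact hnet.mono (subset_inter (subset_of_mem_nhdsSet hU) subset_rfl)

theorem IsLeftReversible.exists_isCoinvariant_totallyBounded [Semigroup S] [TopologicalSpace S]
    [SeparatelyContinuousMul S] [Nonempty X] [SemigroupAction S X] [ContinuousConstSMul S X]
    (hS : IsLeftReversible S) (hcont : ∀ x : X, Continuous fun s : S => s • x)
    (hj : ∀ (s : S) x y, dist (j (s • x)) (j (s • y)) ≤ dist (j x) (j y))
    (hball : ∀ e r, IsClosed (j ⁻¹' Metric.closedBall e r)) (hsep : IsSeparable (range j)) :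
    ∃ Z : Set X, Z.Nonempty ∧ IsCoinvariant S Z ∧ TotallyBounded (j '' Z) := by
  obtain ⟨Z₀, hne, hcl, hco⟩ := hS.exists_isCoinvariant hcont
  obtain ⟨Z, hZ⟩ := exists_minimal_isCoinvariant hne hcl hco
  exact ⟨Z, hZ.prop.1, hZ.prop.2.2,
    totallyBounded_image_of_minimal_isCoinvariant hZ hj hball hsep⟩

end TotallyBounded

section ConvexHull

theorem exists_mem_convexHull_forall_dist_le_lt_diam {E : Type*} [SeminormedAddCommGroup E]
    [NormedSpace ℝ E] {Z : Set E} (hZ : TotallyBounded Z) (hdiam : 0 < Metric.diam Z) :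
    ∃ u ∈ convexHull ℝ Z, ∃ r < Metric.diam Z, ∀ z ∈ Z, dist u z ≤ r := by
  set d := Metric.diam Z
  obtain ⟨t, htZ, htf, hcov⟩ := Metric.finite_approx_of_totallyBounded hZ (d / 2) (half_pos hdiam)
  lift t to Finset E using htf
  have hne : t.Nonempty := by
    obtain ⟨z, hz⟩ : Z.Nonempty := nonempty_iff_ne_empty.2 fun h => by simp [d, h] at hdiam
    obtain ⟨y, hy, -⟩ := mem_iUnion₂.1 (hcov hz)
    exact ⟨y, hy⟩
  have hcard : (0 : ℝ) < t.card := by exact_mod_cast hne.card_pos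
  have hweights : ∑ _y ∈ t, (t.card : ℝ)⁻¹ = 1 := by
    rw [Finset.sum_const, nsmul_eq_mul, mul_inv_cancel₀ hcard.ne']
  refine ⟨∑ y ∈ t, (t.card : ℝ)⁻¹ • y, ?_, d - (t.card : ℝ)⁻¹ * (d / 2), by
    linarith [mul_pos (inv_pos.2 hcard) (half_pos hdiam)], fun z hz => ?_⟩
  · exact (convex_convexHull ℝ Z).sum_mem (fun _ _ => by positivity) hweights
      fun y hy => subset_convexHull ℝ Z (htZ hy)
  -- Some point of the net is within `d / 2` of `z`, and this gain survives averaging.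
  obtain ⟨y₀, hy₀, hzy₀⟩ := mem_iUnion₂.1 (hcov hz)
  have hgap : d / 2 ≤ ∑ y ∈ t, (d - dist y z) := calc
    d / 2 ≤ d - dist y₀ z := by linarith [Metric.mem_ball'.1 hzy₀]
    _ ≤ ∑ y ∈ t, (d - dist y z) := Finset.single_le_sum (f := fun y => d - dist y z)
      (fun y hy => sub_nonneg.2 (Metric.dist_le_diam_of_mem hZ.isBounded (htZ hy) hz)) hy₀
  calc dist (∑ y ∈ t, (t.card : ℝ)⁻¹ • y) z
      ≤ ∑ y ∈ t, (t.card : ℝ)⁻¹ • dist y z := (convexOn_univ_dist z).map_sum_le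
        (fun _ _ => by positivity) hweights fun _ _ => mem_univ _
    _ = d - (t.card : ℝ)⁻¹ * ∑ y ∈ t, (d - dist y z) := by
      rw [← Finset.smul_sum, Finset.sum_sub_distrib, mul_sub, Finset.mul_sum, ← Finset.sum_mul,
        hweights, one_mul, sub_sub_cancel, smul_eq_mul]
    _ ≤ d - (t.card : ℝ)⁻¹ * (d / 2) := by gcongr

end ConvexHull

section WeakTopology

variable {E : Type*} [NormedAddCommGroup E] [NormedSpace ℝ E]

theorem isClosed_toWeakSpace_image {C : Set E} (hconv : Convex ℝ C) (hcl : IsClosed C) :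
    IsClosed (toWeakSpace ℝ E '' C) := by
  rw [← hcl.closure_eq, hconv.toWeakSpace_closure ℝ]
  exact isClosed_closure

theorem isClosed_of_isClosed_toWeakSpace_image {C : Set E}
    (hcl : IsClosed (toWeakSpace ℝ E '' C)) : IsClosed C := by
  rw [← preimage_image_eq C (toWeakSpace ℝ E).injective]
  exact hcl.preimage (toWeakSpaceCLM ℝ E).continuous

theorem nonempty_sInter_of_directedOn_of_convex {C : Set E}
    (hC : IsCompact (toWeakSpace ℝ E '' C)) {c : Set (Set E)} (hc : c.Nonempty)
    (hdir : DirectedOn (· ⊇ ·) c) (hsub : ∀ M ∈ c, M ⊆ C) (hne : ∀ M ∈ c, M.Nonempty)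
    (hconv : ∀ M ∈ c, Convex ℝ M) (hcl : ∀ M ∈ c, IsClosed M) : (⋂₀ c).Nonempty := by
  have : Nonempty c := hc.to_subtype
  have hweak (M : c) : IsClosed (toWeakSpace ℝ E '' M) :=
    isClosed_toWeakSpace_image (hconv M M.2) (hcl M M.2)
  rw [sInter_eq_iInter, ← image_nonempty (f := toWeakSpace ℝ E),
    image_iInter (toWeakSpace ℝ E).bijective]
  refine IsCompact.nonempty_iInter_of_directed_nonempty_isCompact_isClosed _ (fun M N => ?_)
    (fun M => (hne M M.2).image _)
    (fun M => hC.of_isClosed_subset (hweak M) (image_mono (hsub M M.2))) hweak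
  obtain ⟨L, hLM, hLN⟩ := hdir.directed_val M N
  exact ⟨L, image_mono hLM, image_mono hLN⟩

end WeakTopology

section SeparableSubmodule

theorem exists_isSeparable_submodule_mapsTo {R M ι : Type*} [Semiring R] [TopologicalSpace R]
    [SeparableSpace R] [AddCommMonoid M] [Module R M] [TopologicalSpace M]
    [PseudoMetrizableSpace M] [ContinuousAdd M] [ContinuousSMul R M] [Countable ι]
    {f : ι → M → M} {K A : Set M} (hf : ∀ i, ContinuousOn (f i) K) (hA : IsSeparable A) :
    ∃ V : Submodule R M, IsSeparable (V : Set M) ∧ A ⊆ V ∧ ∀ i, MapsTo (f i) (K ∩ V) V := by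
  let step (V : Submodule R M) : Submodule R M :=
    Submodule.span R (V ∪ ⋃ i, f i '' (K ∩ V))
  let V (n : ℕ) : Submodule R M := step^[n] (Submodule.span R A)
  have hsucc (n) : V (n + 1) = step (V n) := Function.iterate_succ_apply' _ _ _
  have hmono : Monotone V := monotone_nat_of_le_succ fun n => by
    rw [hsucc]
    exact subset_union_left.trans Submodule.subset_span
  have hsep (n) : IsSeparable (V n : Set M) := by
    induction n with
    | zero => exact hA.span
    | succ n ih =>
      rw [hsucc]
      exact (ih.union <| .iUnion fun i => ((hf i).mono inter_subset_left).isSeparable_image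
        (ih.mono inter_subset_right)).span
  have hmaps (i n) : MapsTo (f i) (K ∩ V n) (V (n + 1)) := fun x hx => by
    rw [hsucc]
    exact Submodule.subset_span (.inr (mem_iUnion.2 ⟨i, mem_image_of_mem _ hx⟩))
  have hcoe : (↑(⨆ n, V n) : Set M) = ⋃ n, (V n : Set M) :=
    Submodule.coe_iSup_of_directed V hmono.directed_le
  refine ⟨⨆ n, V n, ?_, ?_, fun i x hx => ?_⟩
  · exact hcoe ▸ .iUnion hsep
  · exact Submodule.subset_span.trans (le_iSup V 0)
  · rw [hcoe, mem_inter_iff, mem_iUnion] at hx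
    obtain ⟨hxK, n, hxn⟩ := hx
    exact le_iSup V (n + 1) (hmaps i n ⟨hxK, hxn⟩)

end SeparableSubmodule

section Action

variable {S E : Type*} [NormedAddCommGroup E] [NormedSpace ℝ E] {act : S → E → E} {K : Set E}

/-- A separately weakly continuous nonexpansive action of a semigroup `S` on a subset `K` of a
normed space `E`, given by a map `act : S → E → E` whose values outside `K` are irrelevant. -/
structure IsWeakNonexpansiveAction [Mul S] [TopologicalSpace S] (act : S → E → E) (K : Set E) :
    Prop where
  mapsTo : ∀ s, MapsTo (act s) K K
  mul_act : ∀ s t, ∀ x ∈ K, act (s * t) x = act s (act t x)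
  continuous_orbit : ∀ x ∈ K, Continuous fun s => toWeakSpace ℝ E (act s x)
  continuousOn_act : ∀ s, ContinuousOn
    (fun x : WeakSpace ℝ E => toWeakSpace ℝ E (act s ((toWeakSpace ℝ E).symm x)))
    (toWeakSpace ℝ E '' K)
  norm_sub_le : ∀ s, ∀ x ∈ K, ∀ y ∈ K, ‖act s x - act s y‖ ≤ ‖x - y‖

/-- A nonempty closed convex set which is mapped into itself by every `act s`; the convex sets among
which a minimal one is sought. -/
structure IsClosedConvexInvariant (act : S → E → E) (M : Set E) : Prop where
  nonempty : M.Nonempty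
  convex : Convex ℝ M
  isClosed : IsClosed M
  mapsTo : ∀ s, MapsTo (act s) M M

theorem IsClosedConvexInvariant.exists_minimal {C : Set E} (hC : IsClosedConvexInvariant act C)
    (hcomp : IsCompact (toWeakSpace ℝ E '' C)) :
    ∃ M ⊆ C, Minimal (IsClosedConvexInvariant act) M := by
  suffices h : ∀ c ⊆ {M | M ⊆ C ∧ IsClosedConvexInvariant act M}, IsChain (· ⊆ ·) c →
      c.Nonempty → ∃ lb ∈ {M | M ⊆ C ∧ IsClosedConvexInvariant act M}, ∀ M ∈ c, lb ⊆ M by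
    obtain ⟨M, hMC, hM⟩ := zorn_superset_nonempty _ h C ⟨subset_rfl, hC⟩
    exact ⟨M, hMC, hM.prop.2, fun N hN hNM => hM.le_of_le ⟨hNM.trans hMC, hN⟩ hNM⟩
  intro c hc hchain hcne
  obtain ⟨M₀, hM₀⟩ := hcne
  refine ⟨⋂₀ c, ⟨(sInter_subset_of_mem hM₀).trans (hc hM₀).1, ?_,
    convex_sInter fun M hM => (hc hM).2.convex, isClosed_sInter fun M hM => (hc hM).2.isClosed,
    fun s x hx M hM => (hc hM).2.mapsTo s (hx M hM)⟩, fun _ => sInter_subset_of_mem⟩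
  exact nonempty_sInter_of_directedOn_of_convex hcomp ⟨M₀, hM₀⟩ (IsChain.directedOn hchain.symm)
    (fun M hM => (hc hM).1) (fun M hM => (hc hM).2.nonempty) (fun M hM => (hc hM).2.convex)
    (fun M hM => (hc hM).2.isClosed)

theorem inter_iInter_closedBall_eq_self {M Z : Set E} {u : E} {r : ℝ}
    (hM : Minimal (IsClosedConvexInvariant act) M)
    (hne : ∀ s, ∀ x ∈ M, ∀ y ∈ M, ‖act s x - act s y‖ ≤ ‖x - y‖) (hZM : Z ⊆ M)
    (hZ : ∀ s, Z ⊆ act s '' Z) (hu : u ∈ M) (hur : ∀ z ∈ Z, dist u z ≤ r) :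
    M ∩ ⋂ z ∈ Z, Metric.closedBall z r = M := by
  refine hM.eq_of_subset ⟨⟨u, hu, mem_iInter₂.2 hur⟩, ?_, ?_, ?_⟩ inter_subset_left
  · exact hM.prop.convex.inter (convex_iInter₂ fun z _ => convex_closedBall z r)
  · exact hM.prop.isClosed.inter (isClosed_biInter fun _ _ => Metric.isClosed_closedBall)
  · rintro s x ⟨hx, hxr⟩
    refine ⟨hM.prop.mapsTo s hx, mem_iInter₂.2 fun z hz => ?_⟩
    obtain ⟨y, hy, rfl⟩ := hZ s hz
    have hxy : ‖x - y‖ ≤ r := mem_closedBall_iff_norm.1 (mem_iInter₂.1 hxr y hy)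
    exact mem_closedBall_iff_norm.2 ((hne s x hx y (hZM hy)).trans hxy)

theorem subsingleton_of_minimal_isClosedConvexInvariant {M Z : Set E}
    (hM : Minimal (IsClosedConvexInvariant act) M)
    (hne : ∀ s, ∀ x ∈ M, ∀ y ∈ M, ‖act s x - act s y‖ ≤ ‖x - y‖) (hZM : Z ⊆ M)
    (hZ : ∀ s, Z ⊆ act s '' Z) (hZtb : TotallyBounded Z) : Z.Subsingleton := by
  by_contra hnot
  have hZnt : Z.Nontrivial := not_subsingleton_iff.1 hnot
  obtain ⟨u, hu, r, hr, hur⟩ := exists_mem_convexHull_forall_dist_le_lt_diam hZtb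
    (Metric.diam_pos hZnt hZtb.isBounded)
  have hM_eq := inter_iInter_closedBall_eq_self hM hne hZM hZ
    (convexHull_min hZM hM.prop.convex hu) hur
  have hle : Metric.diam Z ≤ r := by
    refine Metric.diam_le_of_forall_dist_le_of_nonempty hZnt.nonempty fun x hx y hy => ?_
    have hxM : x ∈ M ∩ ⋂ z ∈ Z, Metric.closedBall z r := hM_eq.superset (hZM hx)
    exact mem_iInter₂.1 hxM.2 y hy
  exact hr.not_ge hle

namespace IsWeakNonexpansiveAction

section Mul

variable [Mul S] [TopologicalSpace S]

theorem continuousOn (h : IsWeakNonexpansiveAction act K) (s : S) : ContinuousOn (act s) K := by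
  refine (LipschitzOnWith.of_dist_le_mul (K := 1) fun x hx y hy => ?_).continuousOn
  simpa [dist_eq_norm] using h.norm_sub_le s x hx y hy

theorem mono (h : IsWeakNonexpansiveAction act K) {M : Set E} (hMK : M ⊆ K)
    (hM : ∀ s, MapsTo (act s) M M) : IsWeakNonexpansiveAction act M where
  mapsTo := hM
  mul_act s t x hx := h.mul_act s t x (hMK hx)
  continuous_orbit x hx := h.continuous_orbit x (hMK hx)
  continuousOn_act s := (h.continuousOn_act s).mono (image_mono hMK)
  norm_sub_le s x hx y hy := h.norm_sub_le s x (hMK hx) y (hMK hy)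

theorem exists_isSeparable_isClosedConvexInvariant [SeparableSpace S]
    (h : IsWeakNonexpansiveAction act K) (hne : K.Nonempty) (hconv : Convex ℝ K)
    (hcl : IsClosed K) : ∃ C ⊆ K, IsSeparable C ∧ IsClosedConvexInvariant act C := by
  obtain ⟨x₀, hx₀⟩ := hne
  obtain ⟨D, hD, hdense⟩ := exists_countable_dense S
  have : Countable D := hD.to_subtype
  obtain ⟨V, hVsep, hx₀V, hV⟩ := exists_isSeparable_submodule_mapsTo (R := ℝ)
    (fun d : D => h.continuousOn d.1) (finite_singleton x₀).isSeparable
  have hCK : closure (K ∩ V) ⊆ K := closure_minimal inter_subset_left hcl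
  have hconvC : Convex ℝ (closure (K ∩ V)) := (hconv.inter V.convex).closure
  have hmapsD : ∀ d ∈ D, MapsTo (act d) (closure (K ∩ V)) (closure (K ∩ V)) := fun d hd =>
    MapsTo.closure_of_continuousOn (fun x hx => ⟨h.mapsTo d hx.1, hV ⟨d, hd⟩ hx⟩)
      ((h.continuousOn d).mono hCK)
  refine ⟨closure (K ∩ V), hCK, (hVsep.mono inter_subset_right).closure,
    ⟨x₀, subset_closure ⟨hx₀, hx₀V rfl⟩⟩, hconvC, isClosed_closure, fun s x hx => ?_⟩
  have hweak : IsClosed {s | toWeakSpace ℝ E (act s x) ∈ toWeakSpace ℝ E '' closure (K ∩ V)} :=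
    (isClosed_toWeakSpace_image hconvC isClosed_closure).preimage (h.continuous_orbit x (hCK hx))
  have hmem := hweak.closure_subset_iff.2 (fun d hd => mem_image_of_mem _ (hmapsD d hd hx))
    (hdense s)
  exact (toWeakSpace ℝ E).injective.mem_set_image.1 hmem

theorem isClosed_fixedPoints (h : IsWeakNonexpansiveAction act K)
    (hcomp : IsCompact (toWeakSpace ℝ E '' K)) (s : S) :
    IsClosed (toWeakSpace ℝ E '' {x ∈ K | act s x = x}) := by
  have hpair : ContinuousOn (fun x : WeakSpace ℝ E =>
      (toWeakSpace ℝ E (act s ((toWeakSpace ℝ E).symm x)), x)) (toWeakSpace ℝ E '' K) :=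
    (h.continuousOn_act s).prodMk continuousOn_id
  convert hpair.preimage_isClosed_of_isClosed hcomp.isClosed isClosed_diagonal using 1
  ext x
  obtain ⟨x, rfl⟩ := (toWeakSpace ℝ E).surjective x
  simp [(toWeakSpace ℝ E).injective.mem_set_image]

end Mul

variable [Semigroup S] [TopologicalSpace S]

theorem restrict (h : IsWeakNonexpansiveAction act K) (A : Subsemigroup S) :
    IsWeakNonexpansiveAction (fun a : A => act a) K where
  mapsTo a := h.mapsTo a
  mul_act a b := h.mul_act a b
  continuous_orbit x hx := (h.continuous_orbit x hx).comp continuous_subtype_val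
  continuousOn_act a := h.continuousOn_act a
  norm_sub_le a := h.norm_sub_le a

/-- The action on `K` with the weak topology, as an instance. -/
noncomputable abbrev semigroupAction (h : IsWeakNonexpansiveAction act K) :
    SemigroupAction S (toWeakSpace ℝ E '' K) where
  smul s x := ⟨toWeakSpace ℝ E (act s ((toWeakSpace ℝ E).symm x)), by
    obtain ⟨_, x, hx, rfl⟩ := x
    exact mem_image_of_mem _ (h.mapsTo s hx)⟩
  mul_smul := by
    rintro s t ⟨_, x, hx, rfl⟩
    exact Subtype.ext (congrArg (toWeakSpace ℝ E) (h.mul_act s t x hx))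

theorem exists_totallyBounded_subset_image [SeparatelyContinuousMul S]
    (h : IsWeakNonexpansiveAction act K) (hS : IsLeftReversible S) (hne : K.Nonempty)
    (hcomp : IsCompact (toWeakSpace ℝ E '' K)) (hsep : IsSeparable K) :
    ∃ Z ⊆ K, Z.Nonempty ∧ TotallyBounded Z ∧ ∀ s, Z ⊆ act s '' Z := by
  let X := ↥(toWeakSpace ℝ E '' K)
  let j (x : X) : E := (toWeakSpace ℝ E).symm x
  have hjK (x) : j x ∈ K := by
    obtain ⟨_, x, hx, rfl⟩ := x
    exact hx
  have : CompactSpace X := isCompact_iff_compactSpace.1 hcomp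
  have : Nonempty X := (hne.image _).to_subtype
  let := h.semigroupAction
  have : ContinuousConstSMul S X := ⟨fun s => (h.continuousOn_act s).domRestrict.subtype_mk _⟩
  have hball (e r) : IsClosed (j ⁻¹' Metric.closedBall e r) := by
    have hweak := isClosed_toWeakSpace_image (convex_closedBall e r) Metric.isClosed_closedBall
    rw [LinearEquiv.image_eq_preimage_symm] at hweak
    exact hweak.preimage continuous_subtype_val
  obtain ⟨Z, hZne, hZco, hZtb⟩ := hS.exists_isCoinvariant_totallyBounded (X := X) (j := j)
    (fun x => (h.continuous_orbit (j x) (hjK x)).subtype_mk _)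
    (fun s x y => by
      rw [dist_eq_norm, dist_eq_norm]
      exact h.norm_sub_le s (j x) (hjK x) (j y) (hjK y))
    hball (hsep.mono (range_subset_iff.2 hjK))
  refine ⟨j '' Z, image_subset_iff.2 fun x _ => hjK x, hZne.image j, hZtb, ?_⟩
  rintro s _ ⟨z, hz, rfl⟩
  obtain ⟨y, hy, rfl⟩ := hZco s hz
  exact ⟨j y, mem_image_of_mem j hy, rfl⟩

theorem exists_fixedPoint_of_isLeftReversible [SeparatelyContinuousMul S] [SeparableSpace S]
    (h : IsWeakNonexpansiveAction act K) (hS : IsLeftReversible S) (hne : K.Nonempty)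
    (hconv : Convex ℝ K) (hcomp : IsCompact (toWeakSpace ℝ E '' K)) :
    ∃ x ∈ K, ∀ s, act s x = x := by
  have weaklyCompact {C : Set E} (hCK : C ⊆ K) (hC : IsClosedConvexInvariant act C) :
      IsCompact (toWeakSpace ℝ E '' C) :=
    hcomp.of_isClosed_subset (isClosed_toWeakSpace_image hC.convex hC.isClosed) (image_mono hCK)
  obtain ⟨C, hCK, hCsep, hC⟩ := h.exists_isSeparable_isClosedConvexInvariant hne hconv
    (isClosed_of_isClosed_toWeakSpace_image hcomp.isClosed)
  obtain ⟨M, hMC, hM⟩ := hC.exists_minimal (weaklyCompact hCK hC)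
  have hMact := h.mono (hMC.trans hCK) hM.prop.mapsTo
  obtain ⟨Z, hZM, ⟨z, hz⟩, hZtb, hZ⟩ := hMact.exists_totallyBounded_subset_image hS
    hM.prop.nonempty (weaklyCompact (hMC.trans hCK) hM.prop) (hCsep.mono hMC)
  have hsub := subsingleton_of_minimal_isClosedConvexInvariant hM hMact.norm_sub_le hZM hZ hZtb
  refine ⟨z, hCK (hMC (hZM hz)), fun s => ?_⟩
  obtain ⟨y, hy, hyz⟩ := hZ s hz
  rwa [hsub hy hz] at hyz

theorem exists_fixedPoint_of_countable [SeparatelyContinuousMul S]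
    (h : IsWeakNonexpansiveAction act K) (hS : IsStronglyLeftReversible S) (hne : K.Nonempty)
    (hconv : Convex ℝ K) (hcomp : IsCompact (toWeakSpace ℝ E '' K)) {u : Set S}
    (hu : u.Countable) : ∃ x ∈ K, ∀ s ∈ u, act s x = x := by
  let A : Subsemigroup S := (Subsemigroup.closure u).topologicalClosure
  have huA : u ⊆ A := Subsemigroup.subset_closure.trans (Subsemigroup.le_topologicalClosure _)
  have hcount := countable_subsemigroupClosure hu
  have : SeparableSpace A := separableSpace_closure_of_countable hcount
  have hA : IsLeftReversible A := hS A (Subsemigroup.isClosed_topologicalClosure _)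
    hcount.isSeparable.closure
  obtain ⟨x, hx, hfix⟩ := (h.restrict A).exists_fixedPoint_of_isLeftReversible hA hne hconv hcomp
  exact ⟨x, hx, fun s hs => hfix ⟨s, huA hs⟩⟩

end IsWeakNonexpansiveAction

end Action

theorem common_fixed_point_strongly_leftReversible_general {S E : Type*} [Semigroup S]
    [TopologicalSpace S] [SeparatelyContinuousMul S] [NormedAddCommGroup E] [NormedSpace ℝ E]
    (hS : IsStronglyLeftReversible S) {K : Set E} (hne : K.Nonempty) (hconv : Convex ℝ K)
    (hcomp : IsCompact (toWeakSpace ℝ E '' K)) {act : S → E → E}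
    (hact : IsWeakNonexpansiveAction act K) : ∃ x₀ ∈ K, ∀ s, act s x₀ = x₀ := by
  obtain ⟨_, ⟨x, hx, rfl⟩, hfix⟩ := hcomp.inter_iInter_nonempty _
    (hact.isClosed_fixedPoints hcomp) fun u => by
    obtain ⟨x, hx, hfix⟩ :=
      hact.exists_fixedPoint_of_countable hS hne hconv hcomp u.countable_toSet
    exact ⟨toWeakSpace ℝ E x, mem_image_of_mem _ hx,
      mem_iInter₂.2 fun s hs => mem_image_of_mem _ ⟨hx, hfix s hs⟩⟩
  refine ⟨x, hx, fun s => ?_⟩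
  exact ((toWeakSpace ℝ E).injective.mem_set_image.1 (mem_iInter.1 hfix s)).2

/-- let `S` be a strongly left reversible semitopological semigroup (every
separable closed subsemigroup of `S` is left reversible, i.e. its closed right ideals
pairwise intersect) and `K` a nonempty weakly compact convex subset of a Banach space.
Every separately weakly continuous nonexpansive action of `S` on `K` has a common fixed
point. -/
theorem common_fixed_point_strongly_leftReversible
    {S E : Type*} [Semigroup S] [TopologicalSpace S] [T2Space S]
    [NormedAddCommGroup E] [NormedSpace ℝ E] [CompleteSpace E]
    -- `S` is a semitopological semigroup: multiplication is separately continuous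
    (hmulL : ∀ t : S, Continuous fun s => t * s)
    (hmulR : ∀ t : S, Continuous fun s => s * t)
    -- `S` is strongly left reversible: every separable closed subsemigroup `A` of `S`
    -- is left reversible (any two of its closed right ideals intersect)
    (hslrev : ∀ A : Set S, A.Nonempty → (∀ a ∈ A, ∀ b ∈ A, a * b ∈ A) → IsClosed A →
      TopologicalSpace.IsSeparable A →
      ∀ I J : Set S, I ⊆ A → J ⊆ A → I.Nonempty → J.Nonempty →
        (∀ i ∈ I, ∀ a ∈ A, i * a ∈ I) → (∀ j ∈ J, ∀ a ∈ A, j * a ∈ J) →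
        IsClosed I → IsClosed J → (I ∩ J).Nonempty)
    (K : Set E) (hKne : K.Nonempty) (hKconv : Convex ℝ K)
    (hKcomp : IsCompact (toWeakSpace ℝ E '' K))
    (act : S → E → E) (hmaps : ∀ s : S, Set.MapsTo (act s) K K)
    (haction : ∀ s t : S, ∀ x ∈ K, act (s * t) x = act s (act t x))
    -- the action is separately weakly continuous
    (hcontS : ∀ x ∈ K, Continuous fun s : S => toWeakSpace ℝ E (act s x))
    (hcontK : ∀ s : S, ContinuousOn
      (fun x : WeakSpace ℝ E => toWeakSpace ℝ E (act s ((toWeakSpace ℝ E).symm x)))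
      (toWeakSpace ℝ E '' K))
    -- the action is nonexpansive
    (hne : ∀ s : S, ∀ x ∈ K, ∀ y ∈ K, ‖act s x - act s y‖ ≤ ‖x - y‖) :
    ∃ x₀ ∈ K, ∀ s : S, act s x₀ = x₀ := by
  have : SeparatelyContinuousMul S := ⟨hmulL _, hmulR _⟩
  exact common_fixed_point_strongly_leftReversible_general
    (isStronglyLeftReversible_of_forall_set hslrev) hKne hKconv hKcomp
    ⟨hmaps, haction, hcontS, hcontK, hne⟩
end

section
/- Let K be a nonempty weakly compact convex subset of a Banach space and T₁,…,T_k a commuting family of weakly continuous maps of K into K, each pointwise eventually nonexpansive (for each x there is N_i(x) such that ‖T_i^n x − T_i^n y‖ ≤ ‖x − y‖ for all y ∈ K, n ≥ N_i(x)). Then T₁,…,T_k have a common fixed point. -/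
/-!
Encode `K` as a compact space `X` (its weak topology) with an injection `φ : X → E` (its norm).
By induction on the generators, the monoid `S` generated by finitely many of the maps is *thickly*
nonexpansive: for each `x`, the elements nonexpansive at `x` contain a translate of every finite
subset of `S`.

On a minimal closed `S`-invariant set `M`, norm balls are weakly closed and `M` is norm separable,
so by Baire some weakly open piece of `M` has small norm diameter. Finitely many preimages of that
piece cover `M`; a translate that is nonexpansive at one of its points carries the cover to a
finite norm net, so `M` is norm totally bounded. If `M` is not a point, DeMarr's lemma gives a point
of its convex hull strictly closer to all of `M` than the diameter. Cutting a minimal closed convex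
set that contains the limit points of its orbits along nonexpansive translates by the balls of that
smaller radius around `M` contradicts minimality. Arbitrary families reduce to finite ones by
compactness.
-/

open Set Filter Metric TopologicalSpace
open scoped Pointwise

theorem exists_minimal_isClosed_nonempty_of_sInter {X : Type*} [TopologicalSpace X]
    [CompactSpace X] {p : Set X → Prop}
    (hp : ∀ c : Set (Set X), c.Nonempty → (∀ s ∈ c, p s) → p (⋂₀ c))
    {C : Set X} (hC : IsClosed C) (hne : C.Nonempty) (hpC : p C) :
    ∃ M ⊆ C, Minimal (fun s => IsClosed s ∧ s.Nonempty ∧ p s) M := by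
  refine zorn_superset_nonempty {s : Set X | IsClosed s ∧ s.Nonempty ∧ p s} ?_ C ⟨hC, hne, hpC⟩
  intro c hc hchain hcne
  have := hcne.to_subtype
  have hdir : DirectedOn (· ⊇ ·) c := fun a ha b hb =>
    (hchain.total ha hb).elim (fun h => ⟨a, ha, subset_rfl, h⟩) fun h => ⟨b, hb, h, subset_rfl⟩
  exact ⟨⋂₀ c, ⟨isClosed_sInter fun s hs => (hc hs).1,
    IsCompact.nonempty_sInter_of_directed_nonempty_isCompact_isClosed hdir
      (fun s hs => (hc hs).2.1) (fun s hs => (hc hs).1.isCompact) fun s hs => (hc hs).1,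
    hp c hcne fun s hs => (hc hs).2.2⟩, fun s hs => sInter_subset_of_mem hs⟩

section MinimalActions

variable {S X : Type*} [TopologicalSpace X]

theorem exists_isMinimal_subMulAction [Monoid S] [MulAction S X] [ContinuousConstSMul S X]
    [CompactSpace X] {C : Set X} (hC : IsClosed C) (hne : C.Nonempty)
    (hinv : ∀ s : S, MapsTo (s • ·) C C) :
    ∃ M : SubMulAction S X, (M : Set X) ⊆ C ∧ IsClosed (M : Set X) ∧ (M : Set X).Nonempty ∧
      MulAction.IsMinimal S M := by
  obtain ⟨M, hMC, hM⟩ := exists_minimal_isClosed_nonempty_of_sInter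
    (p := fun D : Set X => ∀ s : S, MapsTo (s • ·) D D)
    (fun c _ hc s x hx D hD => hc D hD s (hx D hD)) hC hne hinv
  obtain ⟨hMcl, hMne, hMinv⟩ := hM.prop
  refine ⟨⟨M, fun s _ hx => hMinv s hx⟩, hMC, hMcl, hMne, ⟨fun x => Subtype.dense_iff.2 ?_⟩⟩
  have horbit : ((↑) '' MulAction.orbit S x : Set X) = MulAction.orbit S (x : X) := by
    rw [MulAction.orbit, ← range_comp]; rfl
  have horbit_sub : MulAction.orbit S (x : X) ⊆ M :=
    range_subset_iff.2 fun s => hMinv s x.2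
  have horbit_inv (s : S) :
      MapsTo (s • ·) (closure (MulAction.orbit S (x : X))) (closure (MulAction.orbit S (x : X))) :=
    (MulAction.mapsTo_smul_orbit s (x : X)).closure (continuous_const_smul s)
  exact (hM.le_of_le ⟨isClosed_closure, (MulAction.nonempty_orbit _).closure, horbit_inv⟩
    (closure_minimal horbit_sub hMcl)).trans_eq (congrArg closure horbit.symm)

theorem smul_surjective_of_isMinimal [CommMonoid S] [MulAction S X] [ContinuousConstSMul S X]
    [CompactSpace X] [T2Space X] [MulAction.IsMinimal S X] (s : S) :
    Function.Surjective (s • · : X → X) := by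
  rcases isEmpty_or_nonempty X with _ | _
  · exact fun x => isEmptyElim x
  · have hinv (t : S) : t • range (s • · : X → X) ⊆ range (s • ·) := by
      rintro _ ⟨_, ⟨x, rfl⟩, rfl⟩
      exact ⟨t • x, smul_comm s t x⟩
    have hclosed := (isCompact_range (continuous_const_smul (T := X) s)).isClosed
    exact range_eq_univ.1 <| (eq_empty_or_univ_of_smul_invariant_closed S hclosed hinv).resolve_left
      (range_nonempty _).ne_empty

theorem separableSpace_of_isMinimal [Monoid S] [Countable S] [MulAction S X]
    [MulAction.IsMinimal S X] : SeparableSpace X := by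
  rcases isEmpty_or_nonempty X with _ | ⟨⟨x⟩⟩
  · infer_instance
  · exact .of_denseRange _ (denseRange_smul S x)

end MinimalActions

section WeaklyContinuous

variable {X E : Type*} [TopologicalSpace X] [SeminormedAddCommGroup E] [NormedSpace ℝ E]
  {φ : X → E}

theorem isClosed_preimage_of_convex_s17 (hφ : Continuous (toWeakSpace ℝ E ∘ φ)) {A : Set E}
    (hA : Convex ℝ A) (hAcl : IsClosed A) : IsClosed (φ ⁻¹' A) := by
  have hweak : IsClosed (toWeakSpace ℝ E '' A) := by
    rw [← hAcl.closure_eq, hA.toWeakSpace_closure ℝ]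
    exact isClosed_closure
  have := hweak.preimage hφ
  rwa [preimage_comp, preimage_image_eq _ (toWeakSpace ℝ E).injective] at this

theorem isSeparable_range_of_weaklyContinuous [SeparableSpace X]
    (hφ : Continuous (toWeakSpace ℝ E ∘ φ)) : IsSeparable (range φ) := by
  obtain ⟨D, hDc, hD⟩ := exists_countable_dense X
  let V := (Submodule.span ℝ (φ '' D)).topologicalClosure
  have hV : IsSeparable (V : Set E) := by
    rw [Submodule.topologicalClosure_coe]
    exact ((hDc.image φ).isSeparable.span (R := ℝ)).closure
  have hDV : D ⊆ φ ⁻¹' V := fun x hx =>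
    Submodule.le_topologicalClosure _ (Submodule.subset_span ⟨x, hx, rfl⟩)
  have hclosed := isClosed_preimage_of_convex_s17 hφ V.convex (Submodule.isClosed_topologicalClosure _)
  exact hV.mono (range_subset_iff.2 fun x => closure_minimal hDV hclosed (hD x))

theorem exists_isOpen_mapsTo_closedBall [BaireSpace X] [Nonempty X]
    (hφ : Continuous (toWeakSpace ℝ E ∘ φ)) (hsep : IsSeparable (range φ)) {ε : ℝ} (hε : 0 < ε) :
    ∃ U : Set X, IsOpen U ∧ U.Nonempty ∧ ∃ a, MapsTo φ U (closedBall a ε) := by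
  obtain ⟨c, hc, hcφ⟩ := hsep
  have := hc.to_subtype
  have hcover : ⋃ a : c, φ ⁻¹' closedBall (a : E) ε = univ := by
    refine iUnion_eq_univ_iff.2 fun x => ?_
    obtain ⟨a, ha, hxa⟩ := mem_closure_iff.1 (hcφ ⟨x, rfl⟩) ε hε
    exact ⟨⟨a, ha⟩, hxa.le⟩
  obtain ⟨a, ha⟩ := nonempty_interior_of_iUnion_of_closed
    (fun a : c => isClosed_preimage_of_convex_s17 hφ (convex_closedBall (a : E) ε) isClosed_closedBall)
    hcover
  exact ⟨_, isOpen_interior, ha, a, fun _ hx => interior_subset (s := φ ⁻¹' _) hx⟩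

end WeaklyContinuous

section DeMarr

theorem exists_mem_convexHull_forall_dist_le_of_totallyBounded {E : Type*}
    [SeminormedAddCommGroup E] [NormedSpace ℝ E] {A : Set E} (hA : TotallyBounded A)
    (hdiam : 0 < diam A) :
    ∃ u ∈ convexHull ℝ A, ∃ ρ < diam A, ∀ a ∈ A, dist u a ≤ ρ := by
  obtain ⟨t, htA, htfin, hAt⟩ := finite_approx_of_totallyBounded hA (diam A / 2) (half_pos hdiam)
  lift t to Finset E using htfin
  have hAne : A.Nonempty := by
    by_contra h
    simp [not_nonempty_iff_eq_empty.1 h] at hdiam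
  have htne : t.Nonempty := by
    obtain ⟨a, ha⟩ := hAne
    obtain ⟨x, hx, -⟩ := mem_iUnion₂.1 (hAt ha)
    exact ⟨x, hx⟩
  set w : ℝ := (t.card : ℝ)⁻¹ with hw
  have hwpos : 0 < w := inv_pos.2 (by exact_mod_cast htne.card_pos)
  have hwsum : ∑ _x ∈ t, w = 1 := by
    rw [Finset.sum_const, nsmul_eq_mul, hw, mul_inv_cancel₀ (by simpa using htne.ne_empty)]
  refine ⟨∑ x ∈ t, w • x, (convex_convexHull ℝ A).sum_mem (fun _ _ => hwpos.le) hwsum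
    fun x hx => subset_convexHull ℝ A (htA hx), diam A - w * (diam A / 2),
    sub_lt_self _ (by positivity), fun a ha => ?_⟩
  have hle_diam : ∀ x ∈ t, dist x a ≤ diam A := fun x hx =>
    dist_le_diam_of_mem hA.isBounded (htA hx) ha
  have hgain : diam A / 2 ≤ ∑ x ∈ t, (diam A - dist x a) := by
    obtain ⟨x, hx, hax⟩ := mem_iUnion₂.1 (hAt ha)
    have hax' : dist x a < diam A / 2 := mem_ball'.1 hax
    have := Finset.single_le_sum (f := fun x => diam A - dist x a)
      (fun y hy => sub_nonneg.2 (hle_diam y hy)) hx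
    linarith
  calc dist (∑ x ∈ t, w • x) a
      ≤ ∑ x ∈ t, w • dist x a :=
        (convexOn_dist a convex_univ).map_sum_le (fun _ _ => hwpos.le) hwsum fun _ _ => mem_univ _
    _ = diam A - w * ∑ x ∈ t, (diam A - dist x a) := by
        rw [← Finset.smul_sum, Finset.sum_sub_distrib, mul_sub, Finset.mul_sum, ← Finset.sum_mul,
          hwsum, one_mul, sub_sub_cancel, smul_eq_mul]
    _ ≤ diam A - w * (diam A / 2) := by gcongr

end DeMarr

section Nonexpansive

variable {S X P : Type*} [PseudoMetricSpace P]

/-- `f` does not increase the distance from `x` to any other point, where distances are measured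
after mapping to a metric space through `φ`. The topology on `X`, if any, is unrelated: for a weakly
compact set, `X` carries the weak topology and `φ` the norm. -/
def NonexpansiveAt (φ : X → P) (f : X → X) (x : X) : Prop :=
  ∀ y, dist (φ (f x)) (φ (f y)) ≤ dist (φ x) (φ y)

/-- At every point, all large iterates of `f` are nonexpansive. -/
def PointwiseEventuallyNonexpansive (φ : X → P) (f : X → X) : Prop :=
  ∀ x, ∀ᶠ n in atTop, NonexpansiveAt φ f^[n] x

variable (S) in
/-- For every `x`, the set of elements of `S` acting nonexpansively at `x` is thick, that is, it
contains a translate of each finite subset of `S`. This is the form of super asymptotic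
nonexpansiveness that the fixed point theorem uses. -/
def ThicklyNonexpansive [Mul S] [SMul S X] (φ : X → P) : Prop :=
  ∀ x, ∀ F : Finset S, ∃ r : S, ∀ s ∈ F, NonexpansiveAt φ ((r * s) • ·) x

variable (S) in
/-- The limit points of the orbit of `x` along the thick set of elements acting nonexpansively
at `x`. -/
def nonexpansiveLimitSet [Mul S] [SMul S X] [TopologicalSpace X] (φ : X → P) (x : X) : Set X :=
  ⋂ F : Finset S, closure ((· • x) '' {r : S | ∀ s ∈ F, NonexpansiveAt φ ((r * s) • ·) x})

theorem NonexpansiveAt.comp {φ : X → P} {f g : X → X} {x : X} (hg : NonexpansiveAt φ g (f x))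
    (hf : NonexpansiveAt φ f x) : NonexpansiveAt φ (g ∘ f) x :=
  fun y => (hg (f y)).trans (hf y)

theorem ThicklyNonexpansive.comp_subtype_val [Monoid S] [MulAction S X] {φ : X → P}
    (h : ThicklyNonexpansive S φ) (M : SubMulAction S X) :
    ThicklyNonexpansive S (φ ∘ ((↑) : M → X)) := by
  intro x F
  obtain ⟨r, hr⟩ := h x F
  exact ⟨r, fun s hs y => hr s hs y⟩

theorem exists_forall_nonexpansiveAt_of_subset_closure [CommMonoid S] [MulAction S X] {φ : X → P}
    (A : Finset S) (hA : ∀ a ∈ A, PointwiseEventuallyNonexpansive φ (a • · : X → X)) (x : X)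
    (F : Finset S) (hF : (F : Set S) ⊆ Submonoid.closure (A : Set S)) :
    ∃ r : S, ∀ s ∈ F, NonexpansiveAt φ ((r * s) • ·) x := by
  classical
  induction A using Finset.induction_on generalizing F with
  | empty =>
    refine ⟨1, fun s hs y => ?_⟩
    obtain rfl : s = 1 := by simpa using hF hs
    simp
  | insert a A _ ih =>
    have hdecomp : ∀ s ∈ F, ∃ (n : ℕ) (b : S),
        b ∈ Submonoid.closure (A : Set S) ∧ a ^ n * b = s := by
      intro s hs
      have := hF hs
      rw [Finset.coe_insert, insert_eq, Submonoid.closure_union, ← Submonoid.powers_eq_closure,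
        SetLike.mem_coe, Submonoid.mem_sup] at this
      obtain ⟨_, ⟨n, rfl⟩, b, hb, rfl⟩ := this
      exact ⟨n, b, hb, rfl⟩
    choose! n b hb hnb using hdecomp
    obtain ⟨r, hr⟩ := ih (fun c hc => hA c (Finset.mem_insert_of_mem hc)) (F.image b)
      (Finset.forall_mem_image.2 hb)
    have hevent : ∀ᶠ m in atTop, ∀ s ∈ F,
        NonexpansiveAt φ (a • · : X → X)^[m + n s] ((r * b s) • x) :=
      (Filter.eventually_all_finset F).2 fun s _ => (tendsto_add_atTop_nat (n s)).eventually
        (hA a (Finset.mem_insert_self a A) ((r * b s) • x))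
    obtain ⟨m, hm⟩ := hevent.exists
    refine ⟨a ^ m * r, fun s hs => ?_⟩
    have hfactor : a ^ m * r * s = a ^ (m + n s) * (r * b s) := by
      rw [pow_add, mul_mul_mul_comm, hnb s hs]
    have hcomp : ((a ^ m * r * s) • · : X → X) = (a • ·)^[m + n s] ∘ ((r * b s) • ·) := by
      funext y
      rw [hfactor, smul_iterate, Function.comp_apply, smul_smul]
    rw [hcomp]
    exact (hm s hs).comp (hr (b s) (Finset.mem_image_of_mem b hs))

theorem thicklyNonexpansive_of_closure_eq_top [CommMonoid S] [MulAction S X] {φ : X → P}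
    {A : Set S} (hAfin : A.Finite) (hA : Submonoid.closure A = ⊤)
    (hpen : ∀ a ∈ A, PointwiseEventuallyNonexpansive φ (a • · : X → X)) :
    ThicklyNonexpansive S φ := by
  lift A to Finset S using hAfin
  exact fun x F => exists_forall_nonexpansiveAt_of_subset_closure A hpen x F (by simp [hA])

section LimitSet

variable [TopologicalSpace X] {φ : X → P}

theorem isClosed_nonexpansiveLimitSet [Mul S] [SMul S X] (x : X) :
    IsClosed (nonexpansiveLimitSet S φ x) :=
  isClosed_iInter fun _ => isClosed_closure

theorem ThicklyNonexpansive.nonexpansiveLimitSet_nonempty [CompactSpace X] [Mul S] [SMul S X]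
    (h : ThicklyNonexpansive S φ) (x : X) : (nonexpansiveLimitSet S φ x).Nonempty := by
  classical
  refine IsCompact.nonempty_iInter_of_directed_nonempty_isCompact_isClosed _ ?_
    (fun F => (Set.Nonempty.image _ (h x F)).closure) (fun F => isClosed_closure.isCompact)
    fun F => isClosed_closure
  refine directed_of_isDirected_le fun F G hFG => closure_mono (image_mono fun r hr s hs => ?_)
  exact hr s (hFG hs)

theorem mapsTo_smul_nonexpansiveLimitSet [CommMonoid S] [MulAction S X] [ContinuousConstSMul S X]
    (x : X) (t : S) :
    MapsTo (t • ·) (nonexpansiveLimitSet S φ x) (nonexpansiveLimitSet S φ x) := by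
  classical
  intro z hz
  refine mem_iInter.2 fun F => ?_
  refine map_mem_closure (continuous_const_smul t) (mem_iInter.1 hz (F.image (t * ·))) ?_
  rintro _ ⟨r, hr, rfl⟩
  refine ⟨t * r, fun s hs => ?_, mul_smul t r x⟩
  have := hr (t * s) (Finset.mem_image_of_mem _ hs)
  rwa [mul_left_comm, ← mul_assoc] at this

theorem nonexpansiveLimitSet_subset_closure [Monoid S] [MulAction S X] (x : X) :
    nonexpansiveLimitSet S φ x ⊆
      closure ((· • x) '' {r : S | NonexpansiveAt φ (r • ·) x}) := by
  refine (iInter_subset _ {1}).trans (closure_mono (image_mono fun r hr => ?_))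
  simpa using hr 1 (Finset.mem_singleton_self 1)

end LimitSet

end Nonexpansive

section FixedPoints

variable {S X E : Type*} [TopologicalSpace X]

theorem totallyBounded_range_of_isMinimal [SeminormedAddCommGroup E] [NormedSpace ℝ E]
    [CommMonoid S] [Countable S] [MulAction S X] [ContinuousConstSMul S X] [CompactSpace X]
    [T2Space X] [MulAction.IsMinimal S X] {φ : X → E} (hφ : Continuous (toWeakSpace ℝ E ∘ φ))
    (hthick : ThicklyNonexpansive S φ) : TotallyBounded (range φ) := by
  classical
  rcases isEmpty_or_nonempty X with _ | _
  · rw [range_eq_empty]; exact totallyBounded_empty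
  refine totallyBounded_iff.2 fun ε hε => ?_
  have := separableSpace_of_isMinimal (S := S) (X := X)
  obtain ⟨U, hUo, hUne, a, hUa⟩ := exists_isOpen_mapsTo_closedBall hφ
    (isSeparable_range_of_weaklyContinuous hφ) (ε := ε / 3) (by positivity)
  obtain ⟨b, hb⟩ := hUne
  obtain ⟨F, hF⟩ := isCompact_univ.elim_finite_subcover (fun s : S => (s • ·) ⁻¹' U)
    (fun s => hUo.preimage (continuous_const_smul s)) (hUo.iUnion_preimage_smul S ⟨b, hb⟩).ge
  -- `c s * s` does not depend on `s ∈ F`: one surjection factors through every piece of the cover.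
  let c : S → S := fun s => ∏ t ∈ F.erase s, t
  obtain ⟨r, hr⟩ := hthick b (F.image c)
  refine ⟨(fun s => φ ((r * c s) • b)) '' F, F.finite_toSet.image _, ?_⟩
  rintro _ ⟨y, rfl⟩
  obtain ⟨x, rfl⟩ := smul_surjective_of_isMinimal (r * ∏ t ∈ F, t) y
  obtain ⟨s, hs, hsx⟩ := mem_iUnion₂.1 (hF (mem_univ x))
  have hfactor : (r * ∏ t ∈ F, t) • x = (r * c s) • s • x := by
    rw [smul_smul, mul_assoc, Finset.prod_erase_mul _ _ hs]
  refine mem_iUnion₂.2 ⟨_, mem_image_of_mem _ hs, mem_ball'.2 ?_⟩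
  calc dist (φ ((r * c s) • b)) (φ ((r * ∏ t ∈ F, t) • x))
      ≤ dist (φ b) (φ (s • x)) := by
        rw [hfactor]; exact hr _ (Finset.mem_image_of_mem c hs) (s • x)
    _ ≤ ε / 3 + ε / 3 :=
        (dist_triangle_right _ _ a).trans (add_le_add (hUa hb) (hUa hsx))
    _ < ε := by linarith

theorem nonexpansiveLimitSet_subset_preimage_iInter_closedBall [SeminormedAddCommGroup E]
    [NormedSpace ℝ E] [Monoid S] [MulAction S X] {φ : X → E}
    (hφ : Continuous (toWeakSpace ℝ E ∘ φ)) {M : Set X} (hM : ∀ s : S, SurjOn (s • ·) M M)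
    {ρ : ℝ} {x : X} (hx : φ x ∈ ⋂ m ∈ M, closedBall (φ m) ρ) :
    nonexpansiveLimitSet S φ x ⊆ φ ⁻¹' ⋂ m ∈ M, closedBall (φ m) ρ := by
  refine (nonexpansiveLimitSet_subset_closure x).trans <| closure_minimal ?_ <|
    isClosed_preimage_of_convex_s17 hφ (convex_iInter₂ fun _ _ => convex_closedBall _ _)
      (isClosed_biInter fun _ _ => isClosed_closedBall)
  rintro _ ⟨r, hr, rfl⟩
  refine mem_iInter₂.2 fun m hm => ?_
  obtain ⟨m', hm', rfl⟩ := hM r hm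
  exact (hr m').trans (mem_iInter₂.1 hx m' hm')

theorem exists_minimal_convex_nonexpansiveLimitSet_subset
    [SeminormedAddCommGroup E] [NormedSpace ℝ E] [Mul S] [SMul S X] [CompactSpace X] [Nonempty X]
    {φ : X → E} (hinj : Function.Injective φ) (hconv : Convex ℝ (range φ)) :
    ∃ C : Set X, Minimal (fun C => IsClosed C ∧ C.Nonempty ∧ Convex ℝ (φ '' C) ∧
      ∀ x ∈ C, nonexpansiveLimitSet S φ x ⊆ C) C := by
  let p : Set X → Prop := fun C =>
    Convex ℝ (φ '' C) ∧ ∀ x ∈ C, nonexpansiveLimitSet S φ x ⊆ C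
  have hp (c : Set (Set X)) (hcne : c.Nonempty) (hc : ∀ D ∈ c, p D) : p (⋂₀ c) := by
    refine ⟨?_, fun x hx => subset_sInter fun D hD => (hc D hD).2 x (hx D hD)⟩
    rw [sInter_eq_biInter, hinj.injOn.image_biInter_eq hcne]
    exact convex_iInter₂ fun D hD => (hc D hD).1
  obtain ⟨C, -, hC⟩ := exists_minimal_isClosed_nonempty_of_sInter hp isClosed_univ univ_nonempty
    ⟨by rwa [image_univ], fun _ _ => subset_univ _⟩
  exact ⟨C, hC⟩

theorem ThicklyNonexpansive.exists_totallyBounded_subMulAction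
    [SeminormedAddCommGroup E] [NormedSpace ℝ E] [CommMonoid S] [Countable S] [MulAction S X]
    [ContinuousConstSMul S X] [CompactSpace X] [T2Space X] {φ : X → E}
    (hthick : ThicklyNonexpansive S φ) (hφ : Continuous (toWeakSpace ℝ E ∘ φ)) {C : Set X}
    (hC : IsClosed C) (hne : C.Nonempty) (hinv : ∀ s : S, MapsTo (s • ·) C C) :
    ∃ M : SubMulAction S X, (M : Set X) ⊆ C ∧ (M : Set X).Nonempty ∧
      TotallyBounded (φ '' M) ∧ ∀ s : S, SurjOn (s • ·) (M : Set X) M := by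
  obtain ⟨M, hMC, hMcl, hMne, _⟩ := exists_isMinimal_subMulAction hC hne hinv
  have : CompactSpace M := isCompact_iff_compactSpace.1 hMcl.isCompact
  have : ContinuousConstSMul S M :=
    ⟨fun s => ((continuous_const_smul s).comp continuous_subtype_val).subtype_mk _⟩
  refine ⟨M, hMC, hMne, ?_, fun s m hm => ?_⟩
  · have := totallyBounded_range_of_isMinimal (S := S) (φ := φ ∘ ((↑) : M → X))
      (hφ.comp continuous_subtype_val) (hthick.comp_subtype_val M)
    rwa [range_comp, Subtype.range_coe] at this
  · obtain ⟨m', hm'⟩ := smul_surjective_of_isMinimal s (⟨m, hm⟩ : M)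
    exact ⟨m', m'.2, congrArg Subtype.val hm'⟩

theorem subsingleton_of_minimal_convex_nonexpansiveLimitSet_subset [NormedAddCommGroup E]
    [NormedSpace ℝ E] [Monoid S] [MulAction S X] {φ : X → E}
    (hφ : Continuous (toWeakSpace ℝ E ∘ φ)) (hinj : Function.Injective φ) {C M : Set X}
    (hC : Minimal (fun C => IsClosed C ∧ C.Nonempty ∧ Convex ℝ (φ '' C) ∧
      ∀ x ∈ C, nonexpansiveLimitSet S φ x ⊆ C) C) (hMC : M ⊆ C) (hMtb : TotallyBounded (φ '' M))
    (hMsurj : ∀ s : S, SurjOn (s • ·) M M) : M.Subsingleton := by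
  by_contra hM
  rw [not_subsingleton_iff] at hM
  obtain ⟨hCcl, -, hCconv, hClim⟩ := hC.prop
  obtain ⟨u, hu, ρ, hρ, huρ⟩ := exists_mem_convexHull_forall_dist_le_of_totallyBounded hMtb
    (diam_pos (hM.image hinj) hMtb.isBounded)
  obtain ⟨u, huC, rfl⟩ := convexHull_min (image_mono hMC) hCconv hu
  let B : Set E := ⋂ m ∈ M, closedBall (φ m) ρ
  have hBconv : Convex ℝ B := convex_iInter₂ fun _ _ => convex_closedBall _ _
  have hBcl : IsClosed B := isClosed_biInter fun _ _ => isClosed_closedBall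
  have hCB : C ⊆ C ∩ φ ⁻¹' B := by
    refine hC.le_of_le ⟨hCcl.inter (isClosed_preimage_of_convex_s17 hφ hBconv hBcl),
      ⟨u, huC, mem_iInter₂.2 fun m hm => huρ _ ⟨m, hm, rfl⟩⟩, ?_, fun x hx => ?_⟩ inter_subset_left
    · rw [image_inter_preimage]
      exact hCconv.inter hBconv
    · exact subset_inter (hClim x hx.1)
        (nonexpansiveLimitSet_subset_preimage_iInter_closedBall hφ hMsurj hx.2)
  have hdist : ∀ x ∈ M, ∀ y ∈ M, dist (φ x) (φ y) ≤ ρ := fun x hx y hy =>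
    mem_iInter₂.1 (hCB (hMC hx)).2 y hy
  obtain ⟨m, hm⟩ := hM.nonempty
  refine hρ.not_ge (diam_le_of_forall_dist_le (dist_nonneg.trans (hdist m hm m hm)) ?_)
  simpa only [forall_mem_image] using hdist

theorem ThicklyNonexpansive.exists_forall_smul_eq [NormedAddCommGroup E] [NormedSpace ℝ E]
    [CommMonoid S] [Countable S] [MulAction S X] [ContinuousConstSMul S X] [CompactSpace X]
    [T2Space X] [Nonempty X] {φ : X → E} (hthick : ThicklyNonexpansive S φ)
    (hφ : Continuous (toWeakSpace ℝ E ∘ φ)) (hinj : Function.Injective φ)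
    (hconv : Convex ℝ (range φ)) : ∃ x : X, ∀ s : S, s • x = x := by
  obtain ⟨C, hC⟩ := exists_minimal_convex_nonexpansiveLimitSet_subset (S := S) hinj hconv
  obtain ⟨-, ⟨x₀, hx₀⟩, -, hClim⟩ := hC.prop
  obtain ⟨M, hMlim, ⟨m, hm⟩, hMtb, hMsurj⟩ := hthick.exists_totallyBounded_subMulAction hφ
    (isClosed_nonexpansiveLimitSet x₀) (hthick.nonexpansiveLimitSet_nonempty x₀)
    (mapsTo_smul_nonexpansiveLimitSet x₀)
  have hM := subsingleton_of_minimal_convex_nonexpansiveLimitSet_subset hφ hinj hC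
    (hMlim.trans (hClim x₀ hx₀)) hMtb hMsurj
  exact ⟨m, fun s => hM (M.smul_mem s hm) hm⟩

end FixedPoints

section CommutingFamilies

theorem countable_submonoid_closure {S : Type*} [Monoid S] {A : Set S} (hA : A.Countable) :
    (Submonoid.closure A : Set S).Countable := by
  have := hA.to_subtype
  have : Countable (FreeMonoid A) := inferInstanceAs (Countable (List A))
  rw [Submonoid.closure_eq_mrange, MonoidHom.coe_mrange]
  exact countable_range _

theorem continuousConstSMul_of_closure_eq_top {S X : Type*} [Monoid S] [MulAction S X]
    [TopologicalSpace X] {A : Set S} (hA : Submonoid.closure A = ⊤)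
    (hcont : ∀ a ∈ A, Continuous (a • · : X → X)) : ContinuousConstSMul S X where
  continuous_const_smul s := by
    induction s using Submonoid.induction_of_closure_eq_top_left hA with
    | one => simpa only [one_smul] using continuous_id'
    | mul_left a ha s hs =>
      simp only [mul_smul]
      exact (hcont a ha).comp hs

variable {X E : Type*} [TopologicalSpace X] [CompactSpace X] [T2Space X] [Nonempty X]
  [NormedAddCommGroup E] [NormedSpace ℝ E] {φ : X → E}

theorem exists_forall_smul_eq_of_finite_of_closure_eq_top {S : Type*} [CommMonoid S] [MulAction S X]
    (hφ : Continuous (toWeakSpace ℝ E ∘ φ)) (hinj : Function.Injective φ)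
    (hconv : Convex ℝ (range φ)) {A : Set S} (hAfin : A.Finite) (hA : Submonoid.closure A = ⊤)
    (hcont : ∀ a ∈ A, Continuous (a • · : X → X))
    (hpen : ∀ a ∈ A, PointwiseEventuallyNonexpansive φ (a • · : X → X)) :
    ∃ x : X, ∀ s : S, s • x = x := by
  have : Countable S := by
    rw [← countable_univ_iff, ← Submonoid.coe_top, ← hA]
    exact countable_submonoid_closure hAfin.countable
  have := continuousConstSMul_of_closure_eq_top hA hcont
  exact (thicklyNonexpansive_of_closure_eq_top hAfin hA hpen).exists_forall_smul_eq hφ hinj hconv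

variable {ι : Type*} {f : ι → X → X}

open scoped IsMulCommutative in
theorem exists_common_fixedPoint_of_finite_of_pointwiseEventuallyNonexpansive [Finite ι]
    (hφ : Continuous (toWeakSpace ℝ E ∘ φ)) (hinj : Function.Injective φ)
    (hconv : Convex ℝ (range φ)) (hcomm : ∀ i j, Function.Commute (f i) (f j))
    (hcont : ∀ i, Continuous (f i)) (hpen : ∀ i, PointwiseEventuallyNonexpansive φ (f i)) :
    ∃ x, ∀ i, f i x = x := by
  let A : Set (Function.End X) := range f
  have : IsMulCommutative (Submonoid.closure A) := Submonoid.isMulCommutative_closure _ <| by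
    rintro _ ⟨i, rfl⟩ _ ⟨j, rfl⟩
    exact (hcomm i j).comp_eq
  obtain ⟨x, hx⟩ := exists_forall_smul_eq_of_finite_of_closure_eq_top
    (S := Submonoid.closure A) hφ hinj hconv
    ((finite_range f).preimage Subtype.val_injective.injOn)
    Submonoid.closure_closure_coe_preimage
    (by rintro ⟨_, _⟩ ⟨i, rfl⟩; exact hcont i)
    (by rintro ⟨_, _⟩ ⟨i, rfl⟩; exact hpen i)
  exact ⟨x, fun i => hx ⟨f i, Submonoid.subset_closure ⟨i, rfl⟩⟩⟩

theorem exists_common_fixedPoint_of_pointwiseEventuallyNonexpansive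
    (hφ : Continuous (toWeakSpace ℝ E ∘ φ)) (hinj : Function.Injective φ)
    (hconv : Convex ℝ (range φ)) (hcomm : ∀ i j, Function.Commute (f i) (f j))
    (hcont : ∀ i, Continuous (f i)) (hpen : ∀ i, PointwiseEventuallyNonexpansive φ (f i)) :
    ∃ x, ∀ i, f i x = x := by
  have hfinite (J : Finset ι) : (⋂ i ∈ J, Function.fixedPoints (f i)).Nonempty := by
    obtain ⟨x, hx⟩ := exists_common_fixedPoint_of_finite_of_pointwiseEventuallyNonexpansive
      (f := fun i : J => f i) hφ hinj hconv (fun i j => hcomm i j) (fun i => hcont i)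
      fun i => hpen i
    exact ⟨x, mem_iInter₂.2 fun i hi => hx ⟨i, hi⟩⟩
  obtain ⟨x, hx⟩ := CompactSpace.iInter_nonempty (fun i => isClosed_fixedPoints (hcont i)) hfinite
  exact ⟨x, fun i => mem_iInter.1 hx i⟩

end CommutingFamilies

theorem common_fixed_point_commuting_pointwiseEventually_weak_general
    {E : Type*} [NormedAddCommGroup E] [NormedSpace ℝ E]
    (K : Set E) (hKne : K.Nonempty) (hKconv : Convex ℝ K)
    (hKcomp : IsCompact (toWeakSpace ℝ E '' K))
    {ι : Type*} (T : ι → E → E)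
    (hmaps : ∀ i, Set.MapsTo (T i) K K)
    (hcomm : ∀ i j, ∀ x ∈ K, T i (T j x) = T j (T i x))
    (hcont : ∀ i, ContinuousOn
      (fun x : WeakSpace ℝ E => toWeakSpace ℝ E (T i ((toWeakSpace ℝ E).symm x)))
      (toWeakSpace ℝ E '' K))
    (hpen : ∀ i, ∀ x ∈ K, ∃ N : ℕ, ∀ n ≥ N, ∀ y ∈ K,
      ‖(T i)^[n] x - (T i)^[n] y‖ ≤ ‖x - y‖) :
    ∃ x₀ ∈ K, ∀ i, T i x₀ = x₀ := by
  let W : Set (WeakSpace ℝ E) := toWeakSpace ℝ E '' K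
  let φ : W → E := fun w => (toWeakSpace ℝ E).symm w
  have hφK (w : W) : φ w ∈ K := by
    obtain ⟨_, x, hx, rfl⟩ := w
    exact hx
  have hrange : range φ = K :=
    (range_subset_iff.2 hφK).antisymm fun x hx => ⟨⟨toWeakSpace ℝ E x, x, hx, rfl⟩, rfl⟩
  have : CompactSpace W := isCompact_iff_compactSpace.1 hKcomp
  have : Nonempty W := (hKne.image _).to_subtype
  let f : ι → W → W := fun i w => ⟨toWeakSpace ℝ E (T i (φ w)), T i (φ w), hmaps i (hφK w), rfl⟩
  have hf (i : ι) : Function.Semiconj φ (f i) (T i) := fun _ => rfl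
  have hinj : Function.Injective φ :=
    (toWeakSpace ℝ E).symm.injective.comp Subtype.val_injective
  have hfcomm (i j : ι) : Function.Commute (f i) (f j) := fun w => hinj (hcomm i j _ (hφK w))
  have hfcont (i : ι) : Continuous (f i) :=
    (continuousOn_iff_continuous_domRestrict.1 (hcont i)).subtype_mk _
  have hfpen (i : ι) : PointwiseEventuallyNonexpansive φ (f i) := fun w => by
    obtain ⟨N, hN⟩ := hpen i (φ w) (hφK w)
    filter_upwards [eventually_ge_atTop N] with n hn v
    rw [(hf i).iterate_right n w, (hf i).iterate_right n v, dist_eq_norm, dist_eq_norm]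
    exact hN n hn _ (hφK v)
  obtain ⟨w, hw⟩ := exists_common_fixedPoint_of_pointwiseEventuallyNonexpansive (φ := φ)
    continuous_subtype_val hinj (hrange ▸ hKconv) hfcomm hfcont hfpen
  exact ⟨φ w, hφK w, fun i => congrArg φ (hw i)⟩

/-- let `K` be a nonempty weakly compact convex subset of a Banach space and
`T₁, …, T_k` a commuting family of weakly continuous self-maps of `K`, each pointwise
eventually nonexpansive.  Then `T₁, …, T_k` have a common fixed point. -/
theorem common_fixed_point_commuting_pointwiseEventually_weak
    {E : Type*} [NormedAddCommGroup E] [NormedSpace ℝ E] [CompleteSpace E]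
    (K : Set E) (hKne : K.Nonempty) (hKconv : Convex ℝ K)
    -- `K` is weakly compact
    (hKcomp : IsCompact (toWeakSpace ℝ E '' K))
    (k : ℕ) (T : Fin k → E → E)
    (hmaps : ∀ i, Set.MapsTo (T i) K K)
    (hcomm : ∀ i j, ∀ x ∈ K, T i (T j x) = T j (T i x))
    -- each `T i` is weakly continuous on `K`
    (hcont : ∀ i, ContinuousOn
      (fun x : WeakSpace ℝ E => toWeakSpace ℝ E (T i ((toWeakSpace ℝ E).symm x)))
      (toWeakSpace ℝ E '' K))
    -- each `T i` is pointwise eventually nonexpansive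
    (hpen : ∀ i, ∀ x ∈ K, ∃ N : ℕ, ∀ n ≥ N, ∀ y ∈ K,
      ‖(T i)^[n] x - (T i)^[n] y‖ ≤ ‖x - y‖) :
    ∃ x₀ ∈ K, ∀ i, T i x₀ = x₀ := by
  exact common_fixed_point_commuting_pointwiseEventually_weak_general K hKne hKconv hKcomp T hmaps
    hcomm hcont hpen
end
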